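/- arXiv:math/0512420 — 2 statements merged into one kernel-verified Lean document; each statement's English description precedes it below -/
import Mathlib

section
/- Let G be a graph with three vertices u, v₁, v₂ such that {v₁,v₂} ∉ E(G), N(u) = {v₁,v₂}, and both G[N(v₁) \ {u}] and G[N(v₂) \ {u}] are complete graphs. If Ind(G \ (Ṅ(u) ∪ (N(v₁) ∩ N(v₂)))) is (n−1)-connected, and Ind(G \ (Ṅ(w₁) ∪ Ṅ(w₂) ∪ {u})) is (n−2)-connected for every edge {w₁,w₂} of the complement of G[N(v₁) ∪ N(v₂) \ {u}], then Ind(G) is n-connected. -/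
open SimpleGraph

/-- A claw in `G` on center `u` and leaves `v₁, v₂, v₃`. -/
def SimpleGraph.IsClaw {V : Type*} (G : SimpleGraph V) (u v₁ v₂ v₃ : V) : Prop :=
  v₁ ≠ v₂ ∧ v₁ ≠ v₃ ∧ v₂ ≠ v₃ ∧
  G.Adj u v₁ ∧ G.Adj u v₂ ∧ G.Adj u v₃ ∧
  ¬G.Adj v₁ v₂ ∧ ¬G.Adj v₁ v₃ ∧ ¬G.Adj v₂ v₃

/-- A graph is claw-free if it has no induced claw. -/
def SimpleGraph.ClawFree {V : Type*} (G : SimpleGraph V) : Prop :=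
  ∀ u v₁ v₂ v₃ : V, ¬ G.IsClaw u v₁ v₂ v₃

/-- The closed neighborhood `Ṅ(v) = N(v) ∪ {v}`. -/
def SimpleGraph.closedNbhd {V : Type*} (G : SimpleGraph V) (v : V) : Set V :=
  insert v (G.neighborSet v)

/-- The set of faces of the independence complex `Ind(G)`. -/
def indepFaces {V : Type*} (G : SimpleGraph V) : Set (Finset V) :=
  {s | ∀ a ∈ s, ∀ b ∈ s, ¬ G.Adj a b}

/-- The geometric realization of an abstract simplicial complex with vertex set `V`. -/
def realization {V : Type*} (K : Set (Finset V)) : Type _ :=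
  {f : V → ℝ // (∀ v, 0 ≤ f v) ∧ (∑ᶠ v, f v) = 1 ∧ ∃ s ∈ K, {v | f v ≠ 0} = ↑s}

instance {V : Type*} (K : Set (Finset V)) : TopologicalSpace (realization K) :=
  instTopologicalSpaceSubtype

/-- A space is `n`-connected (`n : ℤ`) if it is nonempty when `n ≥ -1` and every continuous
map from the `i`-sphere extends to the `(i+1)`-ball for all `0 ≤ i ≤ n`. -/
def IsNConnected (n : ℤ) (X : Type*) [TopologicalSpace X] : Prop :=
  (-1 ≤ n → Nonempty X) ∧
  ∀ i : ℕ, (i : ℤ) ≤ n →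
    ∀ f : C(Metric.sphere (0 : EuclideanSpace ℝ (Fin (i + 1))) 1, X),
      ∃ g : C(Metric.closedBall (0 : EuclideanSpace ℝ (Fin (i + 1))) 1, X),
        ∀ x : Metric.sphere (0 : EuclideanSpace ℝ (Fin (i + 1))) 1,
          g ⟨x.1, Metric.sphere_subset_closedBall x.2⟩ = f x

/-- Relation generating the unreduced suspension: glue `X × {0}` to a south pole and
`X × {1}` to a north pole. -/
def SuspRel (X : Type*) : X × unitInterval ⊕ Bool → X × unitInterval ⊕ Bool → Prop :=
  fun a b => (∃ x, a = Sum.inl (x, 0) ∧ b = Sum.inr false) ∨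
    (∃ x, a = Sum.inl (x, 1) ∧ b = Sum.inr true)

/-- The unreduced suspension of a space. -/
def Susp (X : Type*) [TopologicalSpace X] : Type _ := Quot (SuspRel X)

instance (X : Type*) [TopologicalSpace X] : TopologicalSpace (Susp X) :=
  instTopologicalSpaceQuot

/-- The north pole of a suspension. -/
def Susp.north (X : Type*) [TopologicalSpace X] : Susp X := Quot.mk _ (Sum.inr true)

/-- Relation generating the wedge sum of a family of pointed spaces. -/
def WedgeRel {ι : Type*} (X : ι → Type*) (pt : ∀ i, X i) :
    (Σ i, X i) ⊕ Unit → (Σ i, X i) ⊕ Unit → Prop :=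
  fun a b => ∃ i, a = Sum.inl ⟨i, pt i⟩ ∧ b = Sum.inr ()

/-- The wedge sum of a family of pointed spaces. -/
def Wedge {ι : Type*} (X : ι → Type*) [∀ i, TopologicalSpace (X i)] (pt : ∀ i, X i) :
    Type _ :=
  Quot (WedgeRel X pt)

instance {ι : Type*} (X : ι → Type*) [∀ i, TopologicalSpace (X i)] (pt : ∀ i, X i) :
    TopologicalSpace (Wedge X pt) :=
  instTopologicalSpaceQuot

/-- The graph `L^k_n`: vertices `{1, …, n}`, with `i < j` adjacent iff `j - i < k`. -/
def lineGraphL (n k : ℕ) : SimpleGraph (Fin n) :=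
  SimpleGraph.fromRel (fun i j => (i : ℕ) < j ∧ (j : ℕ) - i < k)

/-- The graph `C^k_n`: vertices `{1, …, n}`, with `i < j` adjacent iff `j - i < k` or
`(n + i) - j < k`. -/
def circGraphC (n k : ℕ) : SimpleGraph (Fin n) :=
  SimpleGraph.fromRel (fun i j => (i : ℕ) < j ∧ ((j : ℕ) - i < k ∨ (n + i) - j < k))

/-- One elementary collapse step: remove a free face `σ` together with the unique face
`τ` properly containing it (with `τ` of one dimension higher). -/
def ElemCollapse {V : Type*} (K L : Set (Finset V)) : Prop :=
  ∃ σ τ : Finset V, σ ∈ K ∧ τ ∈ K ∧ σ ⊂ τ ∧ τ.card = σ.card + 1 ∧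
    (∀ ρ ∈ K, σ ⊂ ρ → ρ = τ) ∧ L = K \ {σ, τ}

/-- `K` collapses onto `L` if there is a finite sequence of elementary collapses from
`K` to `L`. -/
def Collapses {V : Type*} (K L : Set (Finset V)) : Prop :=
  Relation.ReflTransGen ElemCollapse K L

/-!
Let `N[u]` be the closed neighbourhood of `u`. A face of `Ind(G)` avoiding both neighbours of `u`
can be extended by `u`, so `Ind(G)` is the union of the stars of `v₁`, `v₂` and `u`. All three are
cones, and the stars of `v₁` and `v₂` meet in a cone as `v₁` and `v₂` are not adjacent. Hence it is
enough that `(St v₁ ∪ St v₂) ∩ St u` is `(n - 1)`-connected.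

This intersection arises from `Ind(G \ (N[u] ∪ (N(v₁) ∩ N(v₂))))` by deleting all edges `{a, b}`
with `a ∈ N(v₁)` and `b ∈ N(v₂)`. Deleting an edge with an `(m - 1)`-connected link preserves
`m`-connectedness, because the deletion meets the closed star of the edge in the suspension of the
link. As `N(v₁) \ {u}` and `N(v₂) \ {u}` are cliques, no two of the deleted edges lie in a common
face. So they can be deleted one after the other without changing the links of those that remain,
and these links are the complexes `Ind(G \ (N[a] ∪ N[b] ∪ {u}))`.

For a union of two open sets, connectivity follows by cutting the cube with a grid so fine that
every cell is mapped into one of the two sets, and extending the map cell by cell. This transfers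
to complexes because the realization of a complex is homotopy equivalent to an open subset of
`V → ℝ`, chosen so as to be compatible with unions and intersections.
-/

open Metric Set

section Spheres

variable {E F X Y : Type*} [NormedAddCommGroup E] [NormedSpace ℝ E] [NormedAddCommGroup F]
  [NormedSpace ℝ F] [TopologicalSpace X] [TopologicalSpace Y] {m : ℤ}

theorem exists_continuousMap_extension_of_nullhomotopic {f : C(sphere (0 : E) 1, X)}
    (hf : f.Nullhomotopic) : ∃ g : C(E, X), ∀ x : sphere (0 : E) 1, g x = f x := by
  classical
  obtain ⟨x₀, ⟨H⟩⟩ := hf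
  let t : ℝ → unitInterval := projIcc 0 1 zero_le_one
  have ht : Continuous t := continuous_projIcc
  let g : E → X := fun x =>
    if hx : x = 0 then x₀ else H (t (2 - 2 * ‖x‖), (homeomorphUnitSphereProd E ⟨x, hx⟩).1)
  have hg_of_ne : ContinuousOn g {0}ᶜ := by
    have hrestrict : ({0}ᶜ : Set E).domRestrict g = fun x =>
        H (t (2 - 2 * ‖x.1‖), (homeomorphUnitSphereProd E x).1) :=
      funext fun x => dif_neg x.2
    rw [continuousOn_iff_continuous_domRestrict, hrestrict]
    fun_prop
  have hg_near_zero : g =ᶠ[nhds 0] fun _ => x₀ := by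
    filter_upwards [ball_mem_nhds (0 : E) (by norm_num : (0 : ℝ) < 1 / 2)] with x hx
    by_cases hx0 : x = 0
    · exact dif_pos hx0
    · have hx_ge : 1 ≤ 2 - 2 * ‖x‖ := by linarith [mem_ball_zero_iff.1 hx]
      simp [g, hx0, t, projIcc_of_right_le _ hx_ge]
  refine ⟨⟨g, continuous_iff_continuousAt.2 fun x => ?_⟩, fun x => ?_⟩
  · rcases eq_or_ne x 0 with rfl | hx
    · exact continuousAt_const.congr hg_near_zero.symm
    · exact hg_of_ne.continuousAt (isOpen_compl_singleton.mem_nhds hx)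
  · have hx : ‖x.1‖ = 1 := norm_eq_of_mem_sphere x
    have hproj : (homeomorphUnitSphereProd E ⟨x.1, ne_zero_of_mem_unit_sphere x⟩).1 = x :=
      Subtype.ext (by simp [hx])
    simp [g, ne_zero_of_mem_unit_sphere x, t, hproj]

theorem nullhomotopic_of_extension_closedBall {f : C(sphere (0 : E) 1, X)}
    (g : C(closedBall (0 : E) 1, X)) (hg : ∀ x, g ⟨x.1, sphere_subset_closedBall x.2⟩ = f x) :
    f.Nullhomotopic := by
  have : ContractibleSpace (closedBall (0 : E) 1) :=
    ((convex_closedBall (0 : E) 1).starConvex (mem_closedBall_self zero_le_one)).contractibleSpace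
      ⟨0, mem_closedBall_self zero_le_one⟩
  have hfg : f = g.comp ⟨inclusion sphere_subset_closedBall, by fun_prop⟩ :=
    ContinuousMap.ext fun x => (hg x).symm
  rw [hfg]
  exact ((id_nullhomotopic (closedBall (0 : E) 1)).comp_right g).comp_left _

/-- Central projection identifies the unit spheres of two linearly homeomorphic normed spaces. -/
noncomputable def unitSphereHomeomorph (L : E ≃L[ℝ] F) : sphere (0 : E) 1 ≃ₜ sphere (0 : F) 1 where
  toFun x := ⟨‖L x‖⁻¹ • L x, by
    simp [norm_smul, ne_zero_of_mem_unit_sphere x]⟩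
  invFun y := ⟨‖L.symm y‖⁻¹ • L.symm y, by
    simp [norm_smul, ne_zero_of_mem_unit_sphere y]⟩
  left_inv x := Subtype.ext <| by
    simp [norm_smul, smul_smul, ne_zero_of_mem_unit_sphere x]
  right_inv y := Subtype.ext <| by
    simp [norm_smul, smul_smul, ne_zero_of_mem_unit_sphere y]
  continuous_toFun := by
    have h (x : sphere (0 : E) 1) : ‖L x‖ ≠ 0 := by simp [ne_zero_of_mem_unit_sphere x]
    fun_prop (disch := exact h)
  continuous_invFun := by
    have h (y : sphere (0 : F) 1) : ‖L.symm y‖ ≠ 0 := by simp [ne_zero_of_mem_unit_sphere y]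
    fun_prop (disch := exact h)

theorem isNConnected_iff_forall_nullhomotopic :
    IsNConnected m X ↔ ∀ k : ℕ, (k : ℤ) ≤ m + 1 →
      ∀ f : C(sphere (0 : EuclideanSpace ℝ (Fin k)) 1, X), f.Nullhomotopic := by
  have hempty : IsEmpty (sphere (0 : EuclideanSpace ℝ (Fin 0)) 1) :=
    ⟨fun x => ne_zero_of_mem_unit_sphere x (Subsingleton.elim _ _)⟩
  refine ⟨fun hX k hk f => ?_, fun h => ⟨fun hm => ?_, fun i hi f => ?_⟩⟩
  · rcases k with _ | i
    · obtain ⟨x₀⟩ := hX.1 (by omega)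
      exact ⟨x₀, by rw [Subsingleton.elim f (.const _ x₀)]⟩
    · obtain ⟨g, hg⟩ := hX.2 i (by omega) f
      exact nullhomotopic_of_extension_closedBall g hg
  · obtain ⟨x₀, -⟩ := h 0 (by omega) ⟨hempty.elim, continuous_of_const fun x => hempty.elim x⟩
    exact ⟨x₀⟩
  · obtain ⟨g, hg⟩ := exists_continuousMap_extension_of_nullhomotopic (h (i + 1) (by omega) f)
    exact ⟨g.restrict _, hg⟩

theorem IsNConnected.nullhomotopic [FiniteDimensional ℝ E] (hX : IsNConnected m X)
    (hE : (Module.finrank ℝ E : ℤ) ≤ m + 1) (f : C(sphere (0 : E) 1, X)) : f.Nullhomotopic := by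
  let e := unitSphereHomeomorph (toEuclidean (E := E))
  have hf : f = (f.comp (toContinuousMap e.symm)).comp (toContinuousMap e) := by
    ext x; simp
  rw [hf]
  exact (isNConnected_iff_forall_nullhomotopic.1 hX _ hE _).comp_left _

theorem IsNConnected.exists_continuousOn_extension [FiniteDimensional ℝ E] {T : Set X}
    (hT : IsNConnected m T) (hE : (Module.finrank ℝ E : ℤ) ≤ m + 1) {f : E → X}
    (hf : ContinuousOn f (sphere 0 1)) (hfT : MapsTo f (sphere 0 1) T) :
    ∃ g : E → X, Continuous g ∧ (∀ x, g x ∈ T) ∧ EqOn g f (sphere 0 1) := by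
  obtain ⟨g, hg⟩ := exists_continuousMap_extension_of_nullhomotopic
    (hT.nullhomotopic hE ⟨hfT.restrict f _ _, hf.mapsToRestrict hfT⟩)
  exact ⟨fun x => g x, by fun_prop, fun x => (g x).2, fun x hx => congrArg Subtype.val (hg ⟨x, hx⟩)⟩

theorem isNConnected_of_exists_continuousOn_extension [Nonempty X] {T : Set X}
    (h : ∀ k : ℕ, (k : ℤ) ≤ m + 1 → ∀ f : (Fin k → ℝ) → X, ContinuousOn f (sphere 0 1) →
      MapsTo f (sphere 0 1) T → ∃ g : (Fin k → ℝ) → X, ContinuousOn g (closedBall 0 1) ∧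
        MapsTo g (closedBall 0 1) T ∧ EqOn g f (sphere 0 1)) :
    IsNConnected m T := by
  refine isNConnected_iff_forall_nullhomotopic.2 fun k hk f => ?_
  let e := unitSphereHomeomorph (EuclideanSpace.equiv (Fin k) ℝ)
  let F : (Fin k → ℝ) → X :=
    Function.extend Subtype.val (fun y => f (e.symm y)) fun _ => Classical.arbitrary X
  have hF (y : sphere (0 : Fin k → ℝ) 1) : F y = f (e.symm y) :=
    Subtype.val_injective.extend_apply ..
  have hF_cont : ContinuousOn F (sphere 0 1) := by
    rw [continuousOn_iff_continuous_domRestrict, show domRestrict _ F = _ from funext hF]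
    fun_prop
  obtain ⟨g, hg, hgT, hgF⟩ := h k hk F hF_cont fun y hy => by
    rw [hF ⟨y, hy⟩]
    exact (f _).2
  have hfe : (f.comp (toContinuousMap e.symm)).Nullhomotopic :=
    nullhomotopic_of_extension_closedBall ⟨hgT.restrict g _ _, hg.mapsToRestrict hgT⟩
      fun y => Subtype.ext ((hgF y.2).trans (hF y))
  have hf : f = (f.comp (toContinuousMap e.symm)).comp (toContinuousMap e) := by
    ext x; simp
  rw [hf]
  exact hfe.comp_left _

theorem IsNConnected.of_homotopic_id {r : C(X, Y)} {j : C(Y, X)}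
    (hjr : (j.comp r).Homotopic (.id X)) (hY : IsNConnected m Y) : IsNConnected m X := by
  rw [isNConnected_iff_forall_nullhomotopic] at hY ⊢
  intro k hk f
  obtain ⟨x₀, hx₀⟩ := ((hY k hk (r.comp f)).comp_right j)
  exact ⟨x₀, (hjr.comp (.refl f)).symm.trans hx₀⟩

theorem isNConnected_of_contractibleSpace [ContractibleSpace X] : IsNConnected m X :=
  isNConnected_iff_forall_nullhomotopic.2 fun _ _ f => (id_nullhomotopic X).comp_left f

end Spheres

section CellwiseExtension

variable {κ X Y : Type*} [TopologicalSpace X] [TopologicalSpace Y]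

theorem exists_continuousOn_union_of_eqOn_inter {A B : Set Y} (hA : IsClosed A) (hB : IsClosed B)
    {f g : Y → X} (hf : ContinuousOn f A) (hg : ContinuousOn g B) (hfg : EqOn f g (A ∩ B)) :
    ∃ h : Y → X, ContinuousOn h (A ∪ B) ∧ EqOn h f A ∧ EqOn h g B := by
  classical
  have hA_eq : EqOn (A.piecewise f g) f A := piecewise_eqOn A f g
  have hB_eq : EqOn (A.piecewise f g) g B := fun y hy => by
    by_cases hyA : y ∈ A
    · exact (hA_eq hyA).trans (hfg ⟨hyA, hy⟩)
    · exact piecewise_eq_of_notMem A f g hyA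
  exact ⟨_, (hf.congr hA_eq).union_of_isClosed (hg.congr hB_eq) hA hB, hA_eq, hB_eq⟩

variable [PartialOrder κ] {σ : Y → κ}

theorem isClosed_preimage_of_isLowerSet (hσ : ∀ c, IsClosed {y | σ y ≤ c})
    {s : Set κ} (hs : IsLowerSet s) (hfin : s.Finite) : IsClosed (σ ⁻¹' s) := by
  have hunion : σ ⁻¹' s = ⋃ c ∈ s, {y | σ y ≤ c} := by
    ext y
    simp only [mem_preimage, mem_iUnion, mem_ofPred_eq, exists_prop]
    exact ⟨fun hy => ⟨σ y, hy, le_rfl⟩, fun ⟨c, hc, hyc⟩ => hs hyc hc⟩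
  rw [hunion]
  exact hfin.isClosed_biUnion fun c _ => hσ c

/-- The map `σ : Y → κ` cuts `Y` into cells: the open cells are its fibers, and the closed cell of
`c` is `{y | σ y ≤ c}`. -/
theorem exists_continuousOn_of_cell_extension [Nonempty X]
    (hσ : ∀ c, IsClosed {y | σ y ≤ c}) (T : κ → Y → Set X) (s : Finset κ)
    (hs : IsLowerSet (s : Set κ)) (hT : ∀ y z, σ z ∈ s → σ y < σ z → T (σ y) y ⊆ T (σ z) y)
    (hext : ∀ z, σ z ∈ s → ∀ f : Y → X, ContinuousOn f {y | σ y < σ z} →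
      (∀ y, σ y < σ z → f y ∈ T (σ z) y) → ∃ g : Y → X, ContinuousOn g {y | σ y ≤ σ z} ∧
        (∀ y, σ y ≤ σ z → g y ∈ T (σ z) y) ∧ EqOn g f {y | σ y < σ z}) :
    ∃ g : Y → X, ContinuousOn g (σ ⁻¹' s) ∧ ∀ y, σ y ∈ s → g y ∈ T (σ y) y := by
  classical
  induction s using Finset.strongInduction with | H s ih => ?_
  obtain rfl | hne := s.eq_empty_or_nonempty
  · exact ⟨fun _ => Classical.arbitrary X, by simp, by simp⟩
  obtain ⟨a, ha⟩ := s.exists_maximal hne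
  have hs' : IsLowerSet (s.erase a : Set κ) := by
    rw [Finset.coe_erase]
    exact IsLowerSet.erase hs fun b hb hab => (ha.eq_of_le hb hab).symm
  obtain ⟨f, hf, hfT⟩ := ih _ (Finset.erase_ssubset ha.1) hs'
    (fun y z hz => hT y z (Finset.mem_of_mem_erase hz))
    fun z hz => hext z (Finset.mem_of_mem_erase hz)
  have hmem {y} (hy : σ y ∈ s) (hya : σ y ≠ a) : σ y ∈ s.erase a := Finset.mem_erase.2 ⟨hya, hy⟩
  by_cases hza : ∃ z, σ z = a
  · obtain ⟨z, rfl⟩ := hza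
    have hlt {y} (hy : σ y < σ z) : σ y ∈ s.erase (σ z) := hmem (hs hy.le ha.1) hy.ne
    obtain ⟨g₁, hg₁, hg₁T, hg₁f⟩ := hext z ha.1 f (hf.mono fun y => hlt) fun y hy =>
      hT y z ha.1 hy (hfT y (hlt hy))
    obtain ⟨g, hg, hgg₁, hgf⟩ := exists_continuousOn_union_of_eqOn_inter (hσ (σ z))
      (isClosed_preimage_of_isLowerSet hσ hs' (Finset.finite_toSet _)) hg₁ hf
      fun y hy => hg₁f (hy.1.lt_of_ne (Finset.ne_of_mem_erase hy.2))
    refine ⟨g, hg.mono fun y hy => ?_, fun y hy => ?_⟩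
    · exact or_iff_not_imp_left.2 fun hyz => hmem hy fun h => hyz h.le
    · by_cases hyz : σ y = σ z
      · rw [hgg₁ hyz.le, hyz]
        exact hg₁T y hyz.le
      · rw [hgf (hmem hy hyz)]
        exact hfT y (hmem hy hyz)
  · have hne_a (y) : σ y ≠ a := fun h => hza ⟨y, h⟩
    exact ⟨f, hf.mono fun y hy => hmem hy (hne_a y), fun y hy => hfT y (hmem hy (hne_a y))⟩

end CellwiseExtension

section Grid

variable {ι : Type*} {N : ℕ} {x y z : ι → ℝ}

/-- The smallest cell of the cubical grid of mesh `1 / N` containing `x`, recorded as the integer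
box spanned by its two extreme corners scaled by `N`. The cells of the grid are the fibers of
`gridCell N`, and `{y | gridCell N y ≤ gridCell N x}` is the closed cell of `x`. -/
noncomputable def gridCell (N : ℕ) (x : ι → ℝ) : NonemptyInterval (ι → ℤ) where
  fst j := ⌊N * x j⌋
  snd j := ⌈N * x j⌉
  fst_le_snd _ := Int.floor_le_ceil _

theorem gridCell_le_iff {c : NonemptyInterval (ι → ℤ)} :
    gridCell N x ≤ c ↔ ∀ j, (c.fst j : ℝ) ≤ N * x j ∧ N * x j ≤ c.snd j := by
  simp only [NonemptyInterval.le_def, Pi.le_def, gridCell, Int.le_floor, Int.ceil_le, forall_and]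

theorem isClosed_setOf_gridCell_le (c : NonemptyInterval (ι → ℤ)) :
    IsClosed {x | gridCell N x ≤ c} := by
  simp only [gridCell_le_iff, ofPred_forall]
  exact isClosed_iInter fun j =>
    (isClosed_le continuous_const (continuous_const.mul (continuous_apply j))).inter
      (isClosed_le (continuous_const.mul (continuous_apply j)) continuous_const)

theorem gridCell_snd_le_fst_add_one (j : ι) : (gridCell N x).snd j ≤ (gridCell N x).fst j + 1 :=
  Int.ceil_le_floor_add_one _

variable [Fintype ι]

/-- The directions in which a grid cell is not degenerate. -/
def gridDirections (c : NonemptyInterval (ι → ℤ)) : Finset ι := {j | c.fst j < c.snd j}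

theorem mem_gridDirections {c : NonemptyInterval (ι → ℤ)} {j : ι} :
    j ∈ gridDirections c ↔ c.fst j < c.snd j := by
  simp [gridDirections]

theorem gridCell_snd_of_mem_gridDirections {j : ι} (hj : j ∈ gridDirections (gridCell N x)) :
    (gridCell N x).snd j = (gridCell N x).fst j + 1 :=
  (gridCell_snd_le_fst_add_one j).antisymm (mem_gridDirections.1 hj)

theorem notMem_gridDirections_of_eq_intCast {j : ι} {k : ℤ} (hk : N * x j = k) :
    j ∉ gridDirections (gridCell N x) := by
  simp [mem_gridDirections, gridCell, hk]

theorem gridDirections_ssubset_of_gridCell_lt (h : gridCell N y < gridCell N z) :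
    gridDirections (gridCell N y) ⊂ gridDirections (gridCell N z) := by
  obtain ⟨hfst, hsnd⟩ := NonemptyInterval.le_def.1 h.le
  refine Finset.ssubset_iff_subset_ne.2 ⟨fun j hj => ?_, fun heq => h.ne ?_⟩
  · exact mem_gridDirections.2 ((hfst j).trans_lt ((mem_gridDirections.1 hj).trans_le (hsnd j)))
  · have hcoord (j : ι) : (gridCell N y).fst j = (gridCell N z).fst j ∧
        (gridCell N y).snd j = (gridCell N z).snd j := by
      have hdir : j ∈ gridDirections (gridCell N y) ↔ j ∈ gridDirections (gridCell N z) := by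
        rw [heq]
      rw [mem_gridDirections, mem_gridDirections] at hdir
      have : (gridCell N z).fst j ≤ (gridCell N y).fst j := hfst j
      have : (gridCell N y).snd j ≤ (gridCell N z).snd j := hsnd j
      have := gridCell_snd_le_fst_add_one (N := N) (x := z) j
      have : (gridCell N y).fst j ≤ (gridCell N y).snd j := (gridCell N y).fst_le_snd j
      omega
    exact NonemptyInterval.ext
      (Prod.ext (funext fun j => (hcoord j).1) (funext fun j => (hcoord j).2))

theorem dist_le_of_gridCell_le (hN : 0 < N) (h : gridCell N y ≤ gridCell N x) :
    dist y x ≤ 1 / N := by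
  have hN' : (0 : ℝ) < N := Nat.cast_pos.2 hN
  refine (dist_pi_le_iff (by positivity)).2 fun j => ?_
  obtain ⟨hy, hy'⟩ := gridCell_le_iff.1 h j
  obtain ⟨hx, hx'⟩ := gridCell_le_iff.1 (le_refl (gridCell N x)) j
  have hsnd : ((gridCell N x).snd j : ℝ) ≤ (gridCell N x).fst j + 1 := by
    exact_mod_cast gridCell_snd_le_fst_add_one j
  rw [Real.dist_eq, le_div_iff₀ hN', ← abs_of_pos hN', ← abs_mul, abs_le]
  constructor <;> linarith

theorem exists_gridCell_subset_of_isOpen {ι κ : Type*} [Finite ι] {K : Set (ι → ℝ)}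
    (hK : IsCompact K) {O : κ → Set (ι → ℝ)} (hO : ∀ k, IsOpen (O k)) (hKO : K ⊆ ⋃ k, O k) :
    ∃ N : ℕ, 0 < N ∧ ∀ x ∈ K, ∃ k, {y | gridCell N y ≤ gridCell N x} ⊆ O k := by
  cases nonempty_fintype ι
  obtain ⟨δ, hδ, hball⟩ := lebesgue_number_lemma_of_metric hK hO hKO
  obtain ⟨N, hN⟩ := exists_nat_one_div_lt hδ
  refine ⟨N + 1, N.succ_pos, fun x hx => ?_⟩
  obtain ⟨k, hk⟩ := hball x hx
  refine ⟨k, fun y hy => hk ((dist_le_of_gridCell_le N.succ_pos hy).trans_lt ?_)⟩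
  exact_mod_cast hN

/-- The grid box of the cube `[-1, 1]^ι`. -/
def gridCube (ι : Type*) (N : ℕ) : NonemptyInterval (ι → ℤ) where
  fst _ := -N
  snd _ := N
  fst_le_snd _ := by simp

theorem gridCell_le_gridCube_iff (hN : 0 < N) :
    gridCell N x ≤ gridCube ι N ↔ x ∈ closedBall 0 1 := by
  have hN' : (0 : ℝ) < N := Nat.cast_pos.2 hN
  rw [mem_closedBall_zero_iff, pi_norm_le_iff_of_nonneg zero_le_one, gridCell_le_iff]
  refine forall_congr' fun j => ?_
  rw [Real.norm_eq_abs, abs_le]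
  simp only [gridCube, Int.cast_neg, Int.cast_natCast]
  constructor <;> rintro ⟨h, h'⟩ <;> constructor <;> nlinarith

theorem mem_sphere_zero_one_iff : x ∈ sphere 0 1 ↔ x ∈ closedBall 0 1 ∧ ∃ j, |x j| = 1 := by
  rw [mem_sphere_zero_iff_norm, mem_closedBall_zero_iff]
  constructor
  · intro hx
    have hle (j : ι) : |x j| ≤ 1 := hx ▸ norm_le_pi_norm x j
    by_contra! h
    exact hx.not_lt ((pi_norm_lt_iff one_pos).2 fun j => (hle j).lt_of_ne (h hx.le j))
  · rintro ⟨hx, j, hj⟩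
    exact hx.antisymm (hj ▸ norm_le_pi_norm x j)

theorem mem_sphere_of_gridCell_le (hN : 0 < N) (hx : x ∈ sphere 0 1)
    (h : gridCell N y ≤ gridCell N x) : y ∈ sphere 0 1 := by
  obtain ⟨hxball, j, hj⟩ := mem_sphere_zero_one_iff.1 hx
  refine mem_sphere_zero_one_iff.2
    ⟨(gridCell_le_gridCube_iff hN).1 (h.trans ((gridCell_le_gridCube_iff hN).2 hxball)), j, ?_⟩
  have hN' : (N : ℝ) ≠ 0 := Nat.cast_ne_zero.2 hN.ne'
  suffices y j = x j by rw [this, hj]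
  obtain ⟨k, hk⟩ : ∃ k : ℤ, (N : ℝ) * x j = k := by
    rcases eq_or_eq_neg_of_abs_eq hj with hj | hj
    · exact ⟨N, by simp [hj]⟩
    · exact ⟨-N, by simp [hj]⟩
  obtain ⟨hy, hy'⟩ := gridCell_le_iff.1 h j
  simp only [gridCell, hk, Int.floor_intCast, Int.ceil_intCast] at hy hy'
  exact mul_left_cancel₀ hN' (hk ▸ hy'.antisymm hy)

/-- Affine coordinates on the closed grid cell `c`, scaled so that it becomes the cube
`[-1, 1]` in the directions of `c`. -/
def gridChart (N : ℕ) (c : NonemptyInterval (ι → ℤ)) (x : ι → ℝ) (j : gridDirections c) : ℝ :=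
  2 * (N * x j - c.fst j) - 1

/-- The parametrization of the closed grid cell `c` inverse to `gridChart N c`. -/
noncomputable def gridParam (N : ℕ) (c : NonemptyInterval (ι → ℤ)) (a : gridDirections c → ℝ)
    (j : ι) : ℝ := by
  classical
  exact (c.fst j + if hj : j ∈ gridDirections c then (a ⟨j, hj⟩ + 1) / 2 else 0) / N

theorem continuous_gridChart (c : NonemptyInterval (ι → ℤ)) : Continuous (gridChart N c) := by
  unfold gridChart
  fun_prop

theorem continuous_gridParam (c : NonemptyInterval (ι → ℤ)) : Continuous (gridParam N c) := by
  unfold gridParam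
  refine continuous_pi fun j => ?_
  by_cases hj : j ∈ gridDirections c <;> simp only [hj, dif_pos, dif_neg, not_false_eq_true] <;>
    fun_prop

theorem gridParam_gridChart (hN : 0 < N) (h : gridCell N x ≤ gridCell N z) :
    gridParam N (gridCell N z) (gridChart N (gridCell N z) x) = x := by
  have hN' : (N : ℝ) ≠ 0 := Nat.cast_ne_zero.2 hN.ne'
  funext j
  rw [gridParam, div_eq_iff hN']
  by_cases hj : j ∈ gridDirections (gridCell N z)
  · rw [dif_pos hj, gridChart]
    ring
  · obtain ⟨hx, hx'⟩ := gridCell_le_iff.1 h j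
    have hsnd : ((gridCell N z).snd j : ℝ) ≤ (gridCell N z).fst j := by
      exact_mod_cast not_lt.1 fun hlt => hj (mem_gridDirections.2 hlt)
    rw [dif_neg hj]
    linarith

theorem gridChart_mem_closedBall (h : gridCell N x ≤ gridCell N z) :
    gridChart N (gridCell N z) x ∈ closedBall 0 1 := by
  rw [mem_closedBall_zero_iff, pi_norm_le_iff_of_nonneg zero_le_one]
  rintro ⟨j, hj⟩
  obtain ⟨hx, hx'⟩ := gridCell_le_iff.1 h j
  rw [gridCell_snd_of_mem_gridDirections hj, Int.cast_add, Int.cast_one] at hx'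
  rw [Real.norm_eq_abs, abs_le, gridChart]
  constructor <;> linarith

theorem gridChart_mem_sphere (h : gridCell N x < gridCell N z) :
    gridChart N (gridCell N z) x ∈ sphere 0 1 := by
  obtain ⟨j, hjz, hjx⟩ := Finset.exists_of_ssubset (gridDirections_ssubset_of_gridCell_lt h)
  refine mem_sphere_zero_one_iff.2 ⟨gridChart_mem_closedBall h.le, ⟨j, hjz⟩, ?_⟩
  obtain ⟨hx, hx'⟩ := gridCell_le_iff.1 (le_refl (gridCell N x)) j
  obtain ⟨hfst, hsnd⟩ := NonemptyInterval.le_def.1 h.le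
  have hfstj : (gridCell N z).fst j ≤ (gridCell N x).fst j := hfst j
  have hsndj : (gridCell N x).snd j ≤ (gridCell N z).snd j := hsnd j
  rw [gridCell_snd_of_mem_gridDirections hjz] at hsndj
  rw [mem_gridDirections, not_lt] at hjx
  have hxj : (N : ℝ) * x j = (gridCell N x).fst j :=
    (hx'.trans (Int.cast_le.2 hjx)).antisymm hx
  have hcorner : (gridCell N x).fst j = (gridCell N z).fst j ∨
      (gridCell N x).fst j = (gridCell N z).fst j + 1 := by
    have : (gridCell N x).fst j ≤ (gridCell N x).snd j := (gridCell N x).fst_le_snd j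
    omega
  rw [gridChart, hxj]
  rcases hcorner with h | h <;> rw [h] <;> norm_num

theorem natCast_mul_gridParam_of_mem (hN : 0 < N) {c : NonemptyInterval (ι → ℤ)}
    (a : gridDirections c → ℝ) {j : ι} (hj : j ∈ gridDirections c) :
    N * gridParam N c a j = c.fst j + (a ⟨j, hj⟩ + 1) / 2 := by
  rw [gridParam, dif_pos hj, mul_div_cancel₀ _ (Nat.cast_ne_zero.2 hN.ne')]

theorem natCast_mul_gridParam_of_notMem (hN : 0 < N) {c : NonemptyInterval (ι → ℤ)}
    (a : gridDirections c → ℝ) {j : ι} (hj : j ∉ gridDirections c) :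
    N * gridParam N c a j = c.fst j := by
  rw [gridParam, dif_neg hj, add_zero, mul_div_cancel₀ _ (Nat.cast_ne_zero.2 hN.ne')]

theorem gridCell_gridParam_le (hN : 0 < N) {a : gridDirections (gridCell N z) → ℝ}
    (ha : a ∈ closedBall 0 1) : gridCell N (gridParam N (gridCell N z) a) ≤ gridCell N z := by
  refine gridCell_le_iff.2 fun j => ?_
  by_cases hj : j ∈ gridDirections (gridCell N z)
  · have haj := abs_le.1 ((norm_le_pi_norm a ⟨j, hj⟩).trans (mem_closedBall_zero_iff.1 ha))
    rw [natCast_mul_gridParam_of_mem hN a hj, gridCell_snd_of_mem_gridDirections hj, Int.cast_add,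
      Int.cast_one]
    constructor <;> linarith
  · rw [natCast_mul_gridParam_of_notMem hN a hj]
    exact ⟨le_rfl, Int.cast_le.2 ((gridCell N z).fst_le_snd j)⟩

theorem gridCell_gridParam_lt (hN : 0 < N) {a : gridDirections (gridCell N z) → ℝ}
    (ha : a ∈ sphere 0 1) : gridCell N (gridParam N (gridCell N z) a) < gridCell N z := by
  obtain ⟨haball, ⟨j, hj⟩, haj⟩ := mem_sphere_zero_one_iff.1 ha
  refine (gridCell_gridParam_le hN haball).lt_of_ne fun heq => ?_
  obtain ⟨k, hk⟩ : ∃ k : ℤ, (N : ℝ) * gridParam N (gridCell N z) a j = k := by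
    rw [natCast_mul_gridParam_of_mem hN a hj]
    rcases eq_or_eq_neg_of_abs_eq haj with haj | haj
    · exact ⟨(gridCell N z).fst j + 1, by rw [haj]; push_cast; ring⟩
    · exact ⟨(gridCell N z).fst j, by rw [haj]; ring⟩
  exact notMem_gridDirections_of_eq_intCast hk (heq.symm ▸ hj)

theorem IsNConnected.exists_gridCell_extension {X : Type*} [TopologicalSpace X] {T : Set X} {m : ℤ}
    (hT : IsNConnected m T) (hN : 0 < N) (hm : ((gridDirections (gridCell N z)).card : ℤ) ≤ m + 1)
    {f : (ι → ℝ) → X} (hf : ContinuousOn f {x | gridCell N x < gridCell N z})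
    (hfT : ∀ x, gridCell N x < gridCell N z → f x ∈ T) :
    ∃ g : (ι → ℝ) → X, Continuous g ∧ (∀ x, g x ∈ T) ∧
      EqOn g f {x | gridCell N x < gridCell N z} := by
  have hparam : MapsTo (gridParam N (gridCell N z)) (sphere 0 1)
      {x | gridCell N x < gridCell N z} := fun a ha => gridCell_gridParam_lt hN ha
  obtain ⟨g, hg, hgT, hgf⟩ := hT.exists_continuousOn_extension (by simpa using hm)
    (hf.comp (continuous_gridParam _).continuousOn hparam) fun a ha => hfT _ (hparam ha)
  refine ⟨g ∘ gridChart N (gridCell N z), hg.comp (continuous_gridChart _), fun x => hgT _,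
    fun x hx => ?_⟩
  rw [Function.comp_apply, hgf (gridChart_mem_sphere hx), Function.comp_apply,
    gridParam_gridChart hN hx.le]

theorem finite_Iic_nonemptyInterval {α : Type*} [Preorder α] [LocallyFiniteOrder α]
    (c : NonemptyInterval α) : (Iic c).Finite := by
  refine (((finite_Icc c.fst c.snd).prod (finite_Icc c.fst c.snd)).preimage
    NonemptyInterval.toProd_injective.injOn).subset fun d hd => ?_
  obtain ⟨hfst, hsnd⟩ := NonemptyInterval.le_def.1 hd
  exact ⟨⟨hfst, d.fst_le_snd.trans hsnd⟩, hfst.trans d.fst_le_snd, hsnd⟩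

theorem exists_continuousOn_closedBall_of_gridCell_extension {X : Type*} [TopologicalSpace X]
    [Nonempty X] (hN : 0 < N) (T : NonemptyInterval (ι → ℤ) → (ι → ℝ) → Set X)
    (hT : ∀ y, ∀ z ∈ closedBall 0 1, gridCell N y < gridCell N z →
      T (gridCell N y) y ⊆ T (gridCell N z) y)
    (hext : ∀ z ∈ closedBall 0 1, ∀ f : (ι → ℝ) → X,
      ContinuousOn f {y | gridCell N y < gridCell N z} →
      (∀ y, gridCell N y < gridCell N z → f y ∈ T (gridCell N z) y) →
      ∃ g : (ι → ℝ) → X, ContinuousOn g {y | gridCell N y ≤ gridCell N z} ∧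
        (∀ y, gridCell N y ≤ gridCell N z → g y ∈ T (gridCell N z) y) ∧
        EqOn g f {y | gridCell N y < gridCell N z}) :
    ∃ g : (ι → ℝ) → X, ContinuousOn g (closedBall 0 1) ∧
      ∀ y ∈ closedBall 0 1, g y ∈ T (gridCell N y) y := by
  classical
  have hfin := finite_Iic_nonemptyInterval (gridCube ι N)
  have hmem (x : ι → ℝ) : gridCell N x ∈ hfin.toFinset ↔ x ∈ closedBall 0 1 := by
    rw [hfin.mem_toFinset, mem_Iic, gridCell_le_gridCube_iff hN]
  obtain ⟨g, hg, hgT⟩ := exists_continuousOn_of_cell_extension isClosed_setOf_gridCell_le T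
    hfin.toFinset (by simpa using isLowerSet_Iic _) (fun y z hz => hT y z ((hmem z).1 hz))
    fun z hz => hext z ((hmem z).1 hz)
  exact ⟨g, hg.mono fun x hx => (hmem x).2 hx, fun y hy => hgT y ((hmem y).2 hy)⟩

end Grid

section Gluing

variable {ι X : Type*} [Fintype ι] {U V : Set X} {m : ℤ} {N : ℕ}

/-- The values allowed on the closed grid cell `c` when `f`, given on the unit sphere, is extended
to the ball with values in `U ∪ V`. Cells inside `P` go to `U`, all the other cells and their faces
go to `V`. -/
def gridCellTargets (N : ℕ) (P : Set (ι → ℝ)) (U V : Set X) (f : (ι → ℝ) → X)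
    (c : NonemptyInterval (ι → ℤ)) (y : ι → ℝ) : Set X :=
  {x | ({w | gridCell N w ≤ c} ⊆ P → x ∈ U) ∧
    ((∃ z ∈ closedBall (0 : ι → ℝ) 1, c ≤ gridCell N z ∧ ¬ {w | gridCell N w ≤ gridCell N z} ⊆ P) →
      x ∈ V) ∧
    ({w | gridCell N w ≤ c} ⊆ sphere 0 1 → x = f y)}

theorem gridCellTargets_mono {P : Set (ι → ℝ)} {f : (ι → ℝ) → X}
    {c d : NonemptyInterval (ι → ℤ)} (hcd : c ≤ d) (y : ι → ℝ) :
    gridCellTargets N P U V f c y ⊆ gridCellTargets N P U V f d y := by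
  rintro x ⟨hU, hV, hf⟩
  exact ⟨fun h => hU fun w hw => h (le_trans hw hcd),
    fun ⟨z, hz, hdz, hzP⟩ => hV ⟨z, hz, hcd.trans hdz, hzP⟩,
    fun h => hf fun w hw => h (le_trans hw hcd)⟩

variable [TopologicalSpace X]

theorem IsNConnected.exists_gridCellTargets_eq (hU : IsNConnected m U) (hV : IsNConnected m V)
    (hinter : IsNConnected (m - 1) ↥(U ∩ V)) (hm : (Fintype.card ι : ℤ) ≤ m + 1)
    {P : Set (ι → ℝ)} {f : (ι → ℝ) → X} {z : ι → ℝ} (hz : z ∈ closedBall 0 1)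
    (hz_sphere : z ∉ sphere 0 1) :
    ∃ (S : Set X) (d : ℤ), IsNConnected d S ∧ ((gridDirections (gridCell N z)).card : ℤ) ≤ d + 1 ∧
      ∀ y, gridCellTargets N P U V f (gridCell N z) y = S := by
  have hnot_sphere : ¬ {w | gridCell N w ≤ gridCell N z} ⊆ sphere 0 1 :=
    fun h => hz_sphere (h (le_refl (gridCell N z)))
  have hdim : ((gridDirections (gridCell N z)).card : ℤ) ≤ m + 1 :=
    (Int.ofNat_le.2 (Finset.card_le_univ _)).trans hm
  by_cases hzP : {w | gridCell N w ≤ gridCell N z} ⊆ P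
  · by_cases hface : ∃ z' ∈ closedBall (0 : ι → ℝ) 1, gridCell N z ≤ gridCell N z' ∧
      ¬ {w | gridCell N w ≤ gridCell N z'} ⊆ P
    · refine ⟨U ∩ V, m - 1, hinter, ?_, fun y => ?_⟩
      · obtain ⟨z', -, hzz', hz'P⟩ := hface
        have hlt : gridCell N z < gridCell N z' := hzz'.lt_of_ne fun h => hz'P (h ▸ hzP)
        have := Finset.card_lt_card (gridDirections_ssubset_of_gridCell_lt hlt)
        have := Finset.card_le_univ (gridDirections (gridCell N z'))
        omega
      · ext x
        simp only [gridCellTargets, hzP, hface, hnot_sphere]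
        simp
    · refine ⟨U, m, hU, hdim, fun y => ?_⟩
      ext x
      simp only [gridCellTargets, hzP, hface, hnot_sphere]
      simp
  · refine ⟨V, m, hV, hdim, fun y => ?_⟩
    have hface : ∃ z' ∈ closedBall (0 : ι → ℝ) 1, gridCell N z ≤ gridCell N z' ∧
      ¬ {w | gridCell N w ≤ gridCell N z'} ⊆ P := ⟨z, hz, le_rfl, hzP⟩
    ext x
    simp only [gridCellTargets, hzP, hface, hnot_sphere]
    simp

theorem exists_forall_mem_gridCellTargets (hU : IsOpen U) (hV : IsOpen V) {f : (ι → ℝ) → X}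
    (hf : ContinuousOn f (sphere 0 1)) (hfUV : MapsTo f (sphere 0 1) (U ∪ V)) :
    ∃ (N : ℕ) (P : Set (ι → ℝ)), 0 < N ∧ ∀ y ∈ sphere 0 1, ∀ z, gridCell N y ≤ gridCell N z →
      f y ∈ gridCellTargets N P U V f (gridCell N z) y := by
  obtain ⟨P, hP, hPU⟩ := continuousOn_iff'.1 hf U hU
  obtain ⟨Q, hQ, hQV⟩ := continuousOn_iff'.1 hf V hV
  obtain ⟨N, hN, hcover⟩ := exists_gridCell_subset_of_isOpen (isCompact_closedBall 0 1)
    (O := fun b : Bool => bif b then P else Q ∪ (sphere 0 1)ᶜ)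
    (Bool.forall_bool.2 ⟨hQ.union isClosed_sphere.isOpen_compl, hP⟩) fun x _ => by
      by_cases hx : x ∈ sphere 0 1
      · rcases hfUV hx with h | h
        · exact mem_iUnion.2 ⟨true, (hPU.subset ⟨h, hx⟩).1⟩
        · exact mem_iUnion.2 ⟨false, .inl (hQV.subset ⟨h, hx⟩).1⟩
      · exact mem_iUnion.2 ⟨false, .inr hx⟩
  have hcellQ {z} (hz : z ∈ closedBall 0 1) (hzP : ¬ {x | gridCell N x ≤ gridCell N z} ⊆ P) :
      {x | gridCell N x ≤ gridCell N z} ⊆ Q ∪ (sphere 0 1)ᶜ := by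
    obtain ⟨_ | _, h⟩ := hcover z hz
    exacts [h, (hzP h).elim]
  refine ⟨N, P, hN, fun y hy z hyz =>
    ⟨fun hzP => (hPU.superset ⟨hzP hyz, hy⟩).1, ?_, fun _ => rfl⟩⟩
  rintro ⟨z', hz', hzz', hz'P⟩
  exact (hQV.superset ⟨(hcellQ hz' hz'P (hyz.trans hzz')).resolve_right fun h => h hy, hy⟩).1

variable [Nonempty X]

theorem IsNConnected.exists_continuousOn_eq_of_gridCell_subset {S : Set X} (hS : IsNConnected m S)
    (hm : (Fintype.card ι : ℤ) ≤ m + 1) (hN : 0 < N) {F : (ι → ℝ) → X} (hF : Continuous F)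
    {P : Set (ι → ℝ)}
    (hFS : ∀ z ∈ closedBall 0 1, ¬ {x | gridCell N x ≤ gridCell N z} ⊆ P →
      ∀ y ∈ P, gridCell N y ≤ gridCell N z → F y ∈ S) :
    ∃ g : (ι → ℝ) → X, ContinuousOn g (closedBall 0 1) ∧ ∀ y ∈ closedBall 0 1,
      ({x | gridCell N x ≤ gridCell N y} ⊆ P → g y = F y) ∧
      (¬ {x | gridCell N x ≤ gridCell N y} ⊆ P → g y ∈ S) := by
  classical
  let T (c : NonemptyInterval (ι → ℤ)) (y : ι → ℝ) : Set X :=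
    {x | if {x | gridCell N x ≤ c} ⊆ P then x = F y else x ∈ S}
  have hT_pos {c y x} (hc : {x | gridCell N x ≤ c} ⊆ P) : x ∈ T c y ↔ x = F y := by
    simp [T, hc]
  have hT_neg {c y x} (hc : ¬ {x | gridCell N x ≤ c} ⊆ P) : x ∈ T c y ↔ x ∈ S := by
    simp [T, hc]
  obtain ⟨g, hg, hgT⟩ : ∃ g : (ι → ℝ) → X, ContinuousOn g (closedBall 0 1) ∧
      ∀ y ∈ closedBall 0 1, g y ∈ T (gridCell N y) y := by
    refine exists_continuousOn_closedBall_of_gridCell_extension hN T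
      (fun y z hz hyz x hx => ?_) fun z _ f hf hfT => ?_
    · by_cases hzP : {x | gridCell N x ≤ gridCell N z} ⊆ P
      · exact (hT_pos hzP).2 ((hT_pos fun w hw => hzP (le_trans hw hyz.le)).1 hx)
      · refine (hT_neg hzP).2 ?_
        by_cases hyP : {x | gridCell N x ≤ gridCell N y} ⊆ P
        · exact (hT_pos hyP).1 hx ▸ hFS z hz hzP y (hyP (le_refl (gridCell N y))) hyz.le
        · exact (hT_neg hyP).1 hx
    · by_cases hzP : {x | gridCell N x ≤ gridCell N z} ⊆ P
      · exact ⟨F, hF.continuousOn, fun y _ => (hT_pos hzP).2 rfl,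
          fun y hy => ((hT_pos hzP).1 (hfT y hy)).symm⟩
      · have hdim : ((gridDirections (gridCell N z)).card : ℤ) ≤ m + 1 :=
          (Int.ofNat_le.2 (Finset.card_le_univ _)).trans hm
        obtain ⟨g, hg, hgS, hgf⟩ :=
          hS.exists_gridCell_extension hN hdim hf fun y hy => (hT_neg hzP).1 (hfT y hy)
        exact ⟨g, hg.continuousOn, fun y _ => (hT_neg hzP).2 (hgS y), hgf⟩
  exact ⟨g, hg, fun y hy =>
    ⟨fun h => (hT_pos h).1 (hgT y hy), fun h => (hT_neg h).1 (hgT y hy)⟩⟩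

theorem IsNConnected.of_union_of_inter (hU : IsOpen U) (hV : IsOpen V)
    (hUV : IsNConnected m ↥(U ∪ V)) (hinter : IsNConnected m ↥(U ∩ V)) : IsNConnected m U := by
  refine isNConnected_of_exists_continuousOn_extension fun k hk f hf hfU => ?_
  obtain ⟨F, hF, hFUV, hFf⟩ := hUV.exists_continuousOn_extension (by simpa using hk) hf
    (hfU.mono_right subset_union_left)
  obtain ⟨N, hN, hcover⟩ := exists_gridCell_subset_of_isOpen (isCompact_closedBall 0 1)
    (O := fun b : Bool => bif b then F ⁻¹' U else F ⁻¹' V)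
    (Bool.forall_bool.2 ⟨hV.preimage hF, hU.preimage hF⟩) fun x _ =>
      mem_iUnion.2 <| (hFUV x).elim (fun h => ⟨true, h⟩) fun h => ⟨false, h⟩
  have hcellV {z} (hz : z ∈ closedBall 0 1)
      (hzU : ¬ {x | gridCell N x ≤ gridCell N z} ⊆ F ⁻¹' U) :
      {x | gridCell N x ≤ gridCell N z} ⊆ F ⁻¹' V := by
    obtain ⟨_ | _, h⟩ := hcover z hz
    exacts [h, (hzU h).elim]
  obtain ⟨g, hg, hgF⟩ := hinter.exists_continuousOn_eq_of_gridCell_subset (by simpa using hk) hN hF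
    (P := F ⁻¹' U) fun z hz hzU y hyU hyz => ⟨hyU, hcellV hz hzU hyz⟩
  refine ⟨g, hg, fun y hy => ?_, fun y hy => ?_⟩
  · by_cases hyU : {x | gridCell N x ≤ gridCell N y} ⊆ F ⁻¹' U
    · exact (hgF y hy).1 hyU ▸ hyU (le_refl (gridCell N y))
    · exact ((hgF y hy).2 hyU).1
  · have hyU : {x | gridCell N x ≤ gridCell N y} ⊆ F ⁻¹' U := fun x hx => by
      have hx := mem_sphere_of_gridCell_le hN hy hx
      exact (mem_preimage.trans (by rw [hFf hx])).2 (hfU hx)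
    exact ((hgF y (sphere_subset_closedBall hy)).1 hyU).trans (hFf hy)

theorem IsNConnected.union (hU_open : IsOpen U) (hV_open : IsOpen V) (hU : IsNConnected m U)
    (hV : IsNConnected m V) (hinter : IsNConnected (m - 1) ↥(U ∩ V)) :
    IsNConnected m ↥(U ∪ V) := by
  refine isNConnected_of_exists_continuousOn_extension fun k hk f hf hfUV => ?_
  obtain ⟨N, P, hN, hf_target⟩ := exists_forall_mem_gridCellTargets hU_open hV_open hf hfUV
  obtain ⟨g, hg, hgT⟩ : ∃ g : (Fin k → ℝ) → X, ContinuousOn g (closedBall 0 1) ∧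
      ∀ y ∈ closedBall 0 1, g y ∈ gridCellTargets N P U V f (gridCell N y) y := by
    refine exists_continuousOn_closedBall_of_gridCell_extension hN _
      (fun y z _ hyz => gridCellTargets_mono hyz.le y) fun z hz f' hf' hf'T => ?_
    have hcell_sphere (hz_sphere : z ∈ sphere 0 1) :
        {x | gridCell N x ≤ gridCell N z} ⊆ sphere 0 1 :=
      fun x hx => mem_sphere_of_gridCell_le hN hz_sphere hx
    by_cases hz_sphere : z ∈ sphere 0 1
    · exact ⟨f, hf.mono (hcell_sphere hz_sphere),
        fun y hy => hf_target y (hcell_sphere hz_sphere hy) z hy,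
        fun y hy => ((hf'T y hy).2.2 (hcell_sphere hz_sphere)).symm⟩
    · obtain ⟨S, d, hS, hd, hTS⟩ := hU.exists_gridCellTargets_eq hV hinter (by simpa using hk)
        (P := P) (f := f) (N := N) hz hz_sphere
      simp only [hTS] at hf'T ⊢
      obtain ⟨g, hg, hgS, hgf⟩ := hS.exists_gridCell_extension hN hd hf' hf'T
      exact ⟨g, hg.continuousOn, fun y _ => hgS y, hgf⟩
  refine ⟨g, hg, fun y hy => ?_, fun y hy =>
    (hgT y (sphere_subset_closedBall hy)).2.2 fun x hx => mem_sphere_of_gridCell_le hN hy hx⟩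
  by_cases hyP : {x | gridCell N x ≤ gridCell N y} ⊆ P
  · exact .inl ((hgT y hy).1 hyP)
  · exact .inr ((hgT y hy).2.1 ⟨y, hy, le_rfl, hyP⟩)

end Gluing

section Realization

theorem homotopic_of_segment_subset {X E : Type*} [TopologicalSpace X] [AddCommGroup E]
    [TopologicalSpace E] [IsTopologicalAddGroup E] [Module ℝ E] [ContinuousSMul ℝ E] {s : Set E}
    {f g : C(X, s)} (h : ∀ x, segment ℝ (f x : E) (g x) ⊆ s) : f.Homotopic g := by
  let H := ContinuousMap.Homotopy.affine ((ContinuousMap.mk Subtype.val).comp f)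
    ((ContinuousMap.mk Subtype.val).comp g)
  have hH (p : unitInterval × X) : H p ∈ s := h p.2 <| by
    rw [segment_eq_image_lineMap]
    exact ⟨p.1, p.1.2, by simp [H]⟩
  exact ⟨{ toFun := fun p => ⟨H p, hH p⟩
           map_zero_left := fun x => by ext; simp
           map_one_left := fun x => by ext; simp }⟩

theorem finsum_comp_embedding {V W M : Type*} [AddCommMonoid M] (e : W ↪ V) {f : V → M}
    (hf : Function.support f ⊆ range e) : ∑ᶠ w, f (e w) = ∑ᶠ v, f v := by
  rw [← finsum_mem_range (f := f) e.injective, ← finsum_mem_inter_support, inter_eq_right.2 hf,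
    finsum_mem_support]

variable {V W : Type*} {m : ℤ}

/-- The points of `V → ℝ` that make up the realization of `A`. -/
def realizationSet (A : Set (Finset V)) : Set (V → ℝ) :=
  {f | (∀ v, 0 ≤ f v) ∧ (∑ᶠ v, f v) = 1 ∧ ∃ s ∈ A, {v | f v ≠ 0} = ↑s}

theorem comp_embedding_mem_realizationSet {e : W ↪ V} {K : Set (Finset W)} {f : V → ℝ}
    (hf : f ∈ realizationSet (Finset.map e '' K)) : f ∘ e ∈ realizationSet K := by
  obtain ⟨hf_nonneg, hf_sum, _, ⟨s, hs, rfl⟩, hfs⟩ := hf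
  exact ⟨fun w => hf_nonneg _, (finsum_comp_embedding e (hfs.subset.trans (by simp))).trans hf_sum,
    s, hs, by simpa [e.injective.preimage_image] using congrArg (e ⁻¹' ·) hfs⟩

theorem extend_zero_mem_realizationSet (e : W ↪ V) {K : Set (Finset W)} {f : W → ℝ}
    (hf : f ∈ realizationSet K) : Function.extend e f 0 ∈ realizationSet (Finset.map e '' K) := by
  classical
  obtain ⟨hf_nonneg, hf_sum, s, hs, hfs⟩ := hf
  have hsupport : Function.support (Function.extend e f 0) = e '' Function.support f :=
    Function.support_extend_zero e.injective
  refine ⟨fun v => ?_, ?_, s.map e, mem_image_of_mem _ hs, ?_⟩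
  · rw [Function.extend_def]
    split_ifs
    exacts [hf_nonneg _, le_rfl]
  · rw [← finsum_comp_embedding e (hsupport ▸ image_subset_range _ _)]
    simpa only [e.injective.extend_apply] using hf_sum
  · exact hsupport.trans (by rw [Finset.coe_map, ← hfs]; rfl)

theorem IsNConnected.realization_image_map (e : W ↪ V) {K : Set (Finset W)}
    (hK : IsNConnected m (realization K)) :
    IsNConnected m (realization (Finset.map e '' K)) := by
  classical
  let r : C(realizationSet (Finset.map e '' K), realizationSet K) :=
    ⟨fun f => ⟨f ∘ e, comp_embedding_mem_realizationSet f.2⟩,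
      ((Pi.continuous_precomp e).comp continuous_subtype_val).subtype_mk _⟩
  let j : C(realizationSet K, realizationSet (Finset.map e '' K)) := by
    refine ⟨fun f => ⟨Function.extend e f 0, extend_zero_mem_realizationSet e f.2⟩,
      (continuous_pi fun v => ?_).subtype_mk _⟩
    simp only [Function.extend_def]
    split_ifs
    exacts [(continuous_apply _).comp continuous_subtype_val, continuous_const]
  have hjr : j.comp r = .id _ := by
    ext ⟨f, hf⟩ v
    obtain ⟨-, -, _, ⟨s, -, rfl⟩, hfs⟩ := hf
    by_cases hv : ∃ w, e w = v
    · obtain ⟨w, rfl⟩ := hv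
      exact e.injective.extend_apply _ _ _
    · refine (Function.extend_apply' _ _ _ hv).trans (of_not_not fun hfv => hv ?_)
      obtain ⟨w, -, hw⟩ := Finset.mem_map.1 (hfs.subset (Ne.symm hfv))
      exact ⟨w, hw⟩
  exact .of_homotopic_id (r := r) (j := j) (hjr ▸ .refl _) hK

variable {A B : Set (Finset V)}

/-- The points of `V → ℝ` with a positive coordinate whose nonnegative coordinates are indexed by a
face of `A`. This is an open subset homotopy equivalent to the realization of `A`. -/
def openHull (A : Set (Finset V)) : Set (V → ℝ) :=
  {f | (∃ v, 0 < f v) ∧ ∃ s ∈ A, ∀ v, 0 ≤ f v → v ∈ s}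

theorem openHull_union : openHull (A ∪ B) = openHull A ∪ openHull B := by
  ext f
  simp only [openHull, mem_union, mem_ofPred_eq, or_and_right, exists_or, and_or_left]

theorem openHull_inter (hA : IsLowerSet A) (hB : IsLowerSet B) :
    openHull (A ∩ B) = openHull A ∩ openHull B := by
  classical
  ext f
  refine ⟨fun ⟨hf, s, hs, hfs⟩ => ⟨⟨hf, s, hs.1, hfs⟩, hf, s, hs.2, hfs⟩, ?_⟩
  rintro ⟨⟨hf, s, hs, hfs⟩, -, t, ht, hft⟩
  exact ⟨hf, s ∩ t, ⟨hA Finset.inter_subset_left hs, hB Finset.inter_subset_right ht⟩,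
    fun v hv => Finset.mem_inter.2 ⟨hfs v hv, hft v hv⟩⟩

theorem isOpen_openHull [Finite V] : IsOpen (openHull A) := by
  have openHull_eq : openHull A =
      (⋃ v, {f | 0 < f v}) ∩ ⋃ s ∈ A, ⋂ v ∈ {v | v ∉ s}, {f | f v < 0} := by
    ext f
    simp only [openHull, mem_inter_iff, mem_iUnion, mem_iInter, mem_ofPred_eq, exists_prop]
    simp only [← not_le, not_imp_not]
  rw [openHull_eq]
  refine (isOpen_iUnion fun v => isOpen_lt continuous_const (continuous_apply v)).inter
    (isOpen_biUnion fun s _ => (toFinite _).isOpen_biInter fun v _ =>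
      isOpen_lt (continuous_apply v) continuous_const)

section StdSimplex

variable [Fintype V]

theorem mem_realizationSet_iff (hA : IsLowerSet A) {f : V → ℝ} :
    f ∈ realizationSet A ↔ f ∈ stdSimplex ℝ V ∧ ∃ s ∈ A, ∀ v ∉ s, f v = 0 := by
  classical
  rw [realizationSet, mem_ofPred_eq, finsum_eq_sum_of_fintype, stdSimplex, mem_ofPred_eq, and_assoc]
  refine and_congr_right fun _ => and_congr_right fun _ => ⟨fun ⟨s, hs, hfs⟩ =>
    ⟨s, hs, fun v hv => of_not_not fun hfv => hv (hfs.subset hfv)⟩, fun ⟨s, hs, hfs⟩ =>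
      ⟨Finset.univ.filter (f · ≠ 0), hA (fun v hv => ?_) hs, by simp⟩⟩
  exact of_not_not fun hvs => (Finset.mem_filter.1 hv).2 (hfs v hvs)

theorem segment_subset_realizationSet (hA : IsLowerSet A) {s : Finset V} (hs : s ∈ A)
    {f g : V → ℝ} (hf : f ∈ stdSimplex ℝ V) (hfs : ∀ v ∉ s, f v = 0) (hg : g ∈ stdSimplex ℝ V)
    (hgs : ∀ v ∉ s, g v = 0) : segment ℝ f g ⊆ realizationSet A := by
  intro h hh
  refine (mem_realizationSet_iff hA).2
    ⟨(convex_stdSimplex ℝ V).segment_subset hf hg hh, s, hs, fun v hv => ?_⟩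
  obtain ⟨a, b, -, -, -, rfl⟩ := hh
  simp [hfs v hv, hgs v hv]

/-- The positive part of a vector, normalized to have coordinate sum `1`. -/
noncomputable def normalizedPosPart (f : V → ℝ) : V → ℝ := (∑ v, f⁺ v)⁻¹ • f⁺

theorem sum_posPart_pos {f : V → ℝ} (hf : ∃ v, 0 < f v) : 0 < ∑ v, f⁺ v :=
  Finset.sum_pos' (fun v _ => posPart_nonneg f v)
    (hf.imp fun v hv => ⟨Finset.mem_univ v, by simpa using hv⟩)

theorem continuousOn_normalizedPosPart :
    ContinuousOn (normalizedPosPart : (V → ℝ) → V → ℝ) {f | ∃ v, 0 < f v} := by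
  have hpos (v : V) : Continuous fun f : V → ℝ => f⁺ v := by
    simp only [Pi.posPart_apply, posPart_def]
    fun_prop
  exact ((continuous_finsetSum _ fun v _ => hpos v).continuousOn.inv₀
    fun f hf => (sum_posPart_pos hf).ne').smul (continuous_pi hpos).continuousOn

theorem normalizedPosPart_mem_stdSimplex {f : V → ℝ} (hf : ∃ v, 0 < f v) :
    normalizedPosPart f ∈ stdSimplex ℝ V := by
  refine ⟨fun v => mul_nonneg (inv_nonneg.2 (sum_posPart_pos hf).le) (posPart_nonneg f v), ?_⟩
  simp only [normalizedPosPart, Pi.smul_apply, smul_eq_mul]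
  rw [← Finset.mul_sum, inv_mul_cancel₀ (sum_posPart_pos hf).ne']

theorem pos_of_normalizedPosPart_ne_zero {f : V → ℝ} {v : V} (h : normalizedPosPart f v ≠ 0) :
    0 < f v := by
  by_contra! hv
  exact h (by simp [normalizedPosPart, hv])

theorem normalizedPosPart_mem_realizationSet (hA : IsLowerSet A) {f : V → ℝ}
    (hf : f ∈ openHull A) : normalizedPosPart f ∈ realizationSet A := by
  obtain ⟨hf_pos, s, hs, hfs⟩ := hf
  exact (mem_realizationSet_iff hA).2 ⟨normalizedPosPart_mem_stdSimplex hf_pos, s, hs,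
    fun v hv => of_not_not fun h => hv (hfs v (pos_of_normalizedPosPart_ne_zero h).le)⟩

/-- The translation which moves the realization of any complex on `V` into its open hull. -/
noncomputable def shiftDown (f : V → ℝ) : V → ℝ := f - fun _ => (2 * Fintype.card V : ℝ)⁻¹

theorem exists_shiftDown_pos {f : V → ℝ} (hf : f ∈ stdSimplex ℝ V) : ∃ v, 0 < shiftDown f v := by
  by_contra! h
  have hle := Finset.sum_le_card_nsmul Finset.univ f _ fun v _ => sub_nonpos.1 (h v)
  have hcard : (Fintype.card V : ℝ) * (Fintype.card V : ℝ)⁻¹ ≤ 1 := mul_inv_le_one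
  rw [hf.2, Finset.card_univ, nsmul_eq_mul, mul_inv] at hle
  linarith

theorem shiftDown_neg {f : V → ℝ} {v : V} (hf : f v = 0) : shiftDown f v < 0 := by
  have : Nonempty V := ⟨v⟩
  have : 0 < (2 * Fintype.card V : ℝ)⁻¹ := by positivity
  simpa [shiftDown, hf] using this

theorem shiftDown_mem_openHull (hA : IsLowerSet A) {f : V → ℝ} (hf : f ∈ realizationSet A) :
    shiftDown f ∈ openHull A := by
  obtain ⟨hf, s, hs, hfs⟩ := (mem_realizationSet_iff hA).1 hf
  exact ⟨exists_shiftDown_pos hf, s, hs, fun v hv =>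
    of_not_not fun hvs => (shiftDown_neg (hfs v hvs)).not_ge hv⟩

theorem segment_normalizedPosPart_shiftDown_subset (hA : IsLowerSet A) {f : V → ℝ}
    (hf : f ∈ realizationSet A) :
    segment ℝ (normalizedPosPart (shiftDown f)) f ⊆ realizationSet A := by
  obtain ⟨hf, s, hs, hfs⟩ := (mem_realizationSet_iff hA).1 hf
  refine segment_subset_realizationSet hA hs
    (normalizedPosPart_mem_stdSimplex (exists_shiftDown_pos hf)) (fun v hv => ?_) hf hfs
  exact of_not_not fun h =>
    (pos_of_normalizedPosPart_ne_zero h).not_gt (shiftDown_neg (hfs v hv))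

theorem segment_shiftDown_normalizedPosPart_subset {f : V → ℝ} (hf : f ∈ openHull A) :
    segment ℝ (shiftDown (normalizedPosPart f)) f ⊆ openHull A := by
  obtain ⟨hf_pos, s, hs, hfs⟩ := hf
  obtain ⟨v, hv⟩ := exists_shiftDown_pos (normalizedPosPart_mem_stdSimplex hf_pos)
  have hfv : 0 < f v := by
    refine pos_of_normalizedPosPart_ne_zero fun h => (shiftDown_neg h).not_gt hv
  rintro _ ⟨a, b, ha, hb, hab, rfl⟩
  refine ⟨⟨v, convex_Ioi (0 : ℝ) hv hfv ha hb hab⟩, s, hs, fun w hw => of_not_not fun hws => ?_⟩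
  have hfw : f w < 0 := not_le.1 fun h => hws (hfs w h)
  have hshift : shiftDown (normalizedPosPart f) w < 0 := shiftDown_neg <|
    of_not_not fun h => (pos_of_normalizedPosPart_ne_zero h).not_gt hfw
  exact (convex_Iio (0 : ℝ) hshift hfw ha hb hab).not_ge hw

end StdSimplex

variable [Finite V]

theorem isNConnected_realization_of_forall_insert_mem [DecidableEq V] (hA : IsLowerSet A)
    (hA_nonempty : A.Nonempty) {v : V} (hv : ∀ s ∈ A, insert v s ∈ A) :
    IsNConnected m (realization A) := by
  cases nonempty_fintype V
  have hapex (s : Finset V) : ∀ w ∉ insert v s, (Pi.single v 1 : V → ℝ) w = 0 := fun w hw =>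
    Pi.single_eq_of_ne (fun h => hw (Finset.mem_insert.2 (.inl h))) 1
  have hstar : StarConvex ℝ (Pi.single v 1) (realizationSet A) := by
    refine starConvex_iff_segment_subset.2 fun f hf => ?_
    obtain ⟨hf, s, hs, hfs⟩ := (mem_realizationSet_iff hA).1 hf
    exact segment_subset_realizationSet hA (hv s hs) (single_mem_stdSimplex ℝ v) (hapex s) hf
      fun w hw => hfs w fun h => hw (Finset.mem_insert_of_mem h)
  obtain ⟨s, hs⟩ := hA_nonempty
  have := hstar.contractibleSpace ⟨_, (mem_realizationSet_iff hA).2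
    ⟨single_mem_stdSimplex ℝ v, _, hv s hs, hapex s⟩⟩
  exact isNConnected_of_contractibleSpace (X := realizationSet A)

theorem isNConnected_openHull_iff (hA : IsLowerSet A) :
    IsNConnected m (openHull A) ↔ IsNConnected m (realization A) := by
  cases nonempty_fintype V
  let r : C(openHull A, realizationSet A) :=
    ⟨fun f => ⟨normalizedPosPart f, normalizedPosPart_mem_realizationSet hA f.2⟩,
      ((continuousOn_normalizedPosPart.mono fun f hf => hf.1).comp_continuous
        continuous_subtype_val Subtype.prop).subtype_mk _⟩
  let j : C(realizationSet A, openHull A) :=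
    ⟨fun f => ⟨shiftDown f, shiftDown_mem_openHull hA f.2⟩,
      (continuous_subtype_val.sub continuous_const).subtype_mk _⟩
  exact ⟨.of_homotopic_id (r := j) (j := r) <| homotopic_of_segment_subset fun f =>
      segment_normalizedPosPart_shiftDown_subset hA f.2,
    .of_homotopic_id (r := r) (j := j) <| homotopic_of_segment_subset fun f =>
      segment_shiftDown_normalizedPosPart_subset f.2⟩

theorem IsNConnected.realization_union (hA : IsLowerSet A) (hB : IsLowerSet B)
    (hA_conn : IsNConnected m (realization A)) (hB_conn : IsNConnected m (realization B))
    (hinter : IsNConnected (m - 1) (realization (A ∩ B))) :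
    IsNConnected m (realization (A ∪ B)) := by
  rw [← isNConnected_openHull_iff (hA.union hB), openHull_union]
  rw [← isNConnected_openHull_iff (hA.inter hB), openHull_inter hA hB] at hinter
  exact .union isOpen_openHull isOpen_openHull ((isNConnected_openHull_iff hA).2 hA_conn)
    ((isNConnected_openHull_iff hB).2 hB_conn) hinter

theorem IsNConnected.realization_of_union_of_inter (hA : IsLowerSet A) (hB : IsLowerSet B)
    (hunion : IsNConnected m (realization (A ∪ B)))
    (hinter : IsNConnected m (realization (A ∩ B))) : IsNConnected m (realization A) := by
  rw [← isNConnected_openHull_iff (hA.union hB), openHull_union] at hunion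
  rw [← isNConnected_openHull_iff (hA.inter hB), openHull_inter hA hB] at hinter
  exact (isNConnected_openHull_iff hA).1
    (.of_union_of_inter isOpen_openHull isOpen_openHull hunion hinter)

end Realization

section EdgeDeletion

variable {V : Type*} {A : Set (Finset V)} {m : ℤ}

/-- The subcomplex of the faces of `A` that contain no member of the family `E`. -/
def deletion (A E : Set (Finset V)) : Set (Finset V) := {s ∈ A | ∀ e ∈ E, ¬ e ⊆ s}

theorem isLowerSet_deletion (hA : IsLowerSet A) (E : Set (Finset V)) :
    IsLowerSet (deletion A E) :=
  fun _ _ hts hs => ⟨hA hts hs.1, fun e he h => hs.2 e he (h.trans hts)⟩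

theorem deletion_empty (A : Set (Finset V)) : deletion A ∅ = A := by simp [deletion]

theorem deletion_insert (A E : Set (Finset V)) (e : Finset V) :
    deletion A (insert e E) = deletion (deletion A E) {e} := by
  ext s
  simp only [deletion, mem_ofPred_eq, forall_mem_insert, mem_singleton_iff, forall_eq]
  tauto

variable [DecidableEq V] {e : Finset V}

/-- The closed star of `e` in `A`. -/
def closedStar (A : Set (Finset V)) (e : Finset V) : Set (Finset V) := {s | s ∪ e ∈ A}

/-- The link of `e` in `A`. -/
def link (A : Set (Finset V)) (e : Finset V) : Set (Finset V) :=
  {s ∈ closedStar A e | Disjoint s e}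

theorem isLowerSet_closedStar (hA : IsLowerSet A) : IsLowerSet (closedStar A e) :=
  fun _ _ hts hs => hA (Finset.union_subset_union_left hts) hs

theorem deletion_singleton_union_closedStar (hA : IsLowerSet A) :
    deletion A {e} ∪ closedStar A e = A := by
  refine Subset.antisymm (union_subset (sep_subset _ _) fun s hs => hA Finset.subset_union_left hs)
    fun s hs => ?_
  by_cases hes : e ⊆ s
  · exact .inr (by rwa [closedStar, mem_ofPred_eq, Finset.union_eq_left.2 hes])
  · exact .inl ⟨hs, by simpa using hes⟩

theorem deletion_pair_inter_closedStar (hA : IsLowerSet A) (a b : V) :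
    deletion A {{a, b}} ∩ closedStar A {a, b} =
      {s ∈ closedStar A {a, b} | a ∉ s} ∪ {s ∈ closedStar A {a, b} | b ∉ s} := by
  ext s
  have hs : s ∈ closedStar A {a, b} → s ∈ A := fun h => hA Finset.subset_union_left h
  simp only [deletion, mem_inter_iff, mem_union, mem_ofPred_eq, mem_singleton_iff, forall_eq,
    Finset.insert_subset_iff, Finset.singleton_subset_iff]
  tauto

theorem link_pair (A : Set (Finset V)) (a b : V) : link A {a, b} =
    {s ∈ closedStar A {a, b} | a ∉ s} ∩ {s ∈ closedStar A {a, b} | b ∉ s} := by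
  ext s
  simp only [link, mem_inter_iff, mem_ofPred_eq, Finset.disjoint_insert_right,
    Finset.disjoint_singleton_right]
  tauto

theorem insert_mem_closedStar {v : V} {s : Finset V} (hv : v ∈ e) (hs : s ∈ closedStar A e) :
    insert v s ∈ closedStar A e := by
  have h : insert v s ∪ e = s ∪ e := by
    rw [Finset.insert_union, Finset.insert_eq_self.2 (Finset.mem_union_right s hv)]
  exact (congrArg (· ∈ A) h).mpr hs

theorem link_deletion {E : Set (Finset V)} (hA : IsLowerSet A) (hE : ∀ e' ∈ E, e ∪ e' ∉ A) :
    link (deletion A E) e = link A e := by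
  ext s
  refine ⟨fun hs => ⟨hs.1.1, hs.2⟩, fun hs => ⟨⟨hs.1, fun e' he' h => hE e' he' ?_⟩, hs.2⟩⟩
  exact hA (Finset.union_subset Finset.subset_union_right h) hs.1

theorem IsNConnected.realization_deletion_pair [Finite V] (hA : IsLowerSet A) {a b : V}
    (hab : a ≠ b) (hab_mem : {a, b} ∈ A) (hA_conn : IsNConnected m (realization A))
    (hlink : IsNConnected (m - 1) (realization (link A {a, b}))) :
    IsNConnected m (realization (deletion A {{a, b}})) := by
  have hlower (c : V) : IsLowerSet {s ∈ closedStar A {a, b} | c ∉ s} :=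
    fun s t hts hs => ⟨isLowerSet_closedStar hA hts hs.1, fun h => hs.2 (hts h)⟩
  have hcone {c d : V} (hcd : c ≠ d) (hd : d ∈ ({a, b} : Finset V)) :
      IsNConnected m (realization {s ∈ closedStar A {a, b} | c ∉ s}) :=
    isNConnected_realization_of_forall_insert_mem (v := d) (hlower c)
      ⟨∅, by simpa [closedStar] using hab_mem⟩
      fun s hs => ⟨insert_mem_closedStar hd hs.1, by simpa [hcd] using hs.2⟩
  refine .realization_of_union_of_inter (isLowerSet_deletion hA _)
    (isLowerSet_closedStar (e := {a, b}) hA) ?_ ?_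
  · rwa [deletion_singleton_union_closedStar hA]
  · rw [deletion_pair_inter_closedStar hA]
    exact .realization_union (hlower a) (hlower b) (hcone hab (by simp))
      (hcone hab.symm (by simp)) (link_pair A a b ▸ hlink)

theorem IsNConnected.realization_deletion [Finite V] (hA : IsLowerSet A) {E : Set (Finset V)}
    (hE : ∀ e ∈ E, e ∈ A ∧ e.card = 2) (hE_pairwise : E.Pairwise fun e e' => e ∪ e' ∉ A)
    (hA_conn : IsNConnected m (realization A))
    (hlink : ∀ e ∈ E, IsNConnected (m - 1) (realization (link A e))) :
    IsNConnected m (realization (deletion A E)) := by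
  induction E, E.toFinite using Set.Finite.induction_on with
  | empty => rwa [deletion_empty]
  | @insert e E he _ ih =>
    have hE_union : ∀ e' ∈ E, e ∪ e' ∉ A := fun e' he' =>
      hE_pairwise (mem_insert e E) (mem_insert_of_mem e he') fun h => he (h ▸ he')
    rw [forall_mem_insert] at hE hlink
    obtain ⟨⟨he_mem, he_card⟩, hE⟩ := hE
    obtain ⟨a, b, hab, rfl⟩ := Finset.card_eq_two.1 he_card
    rw [deletion_insert]
    refine .realization_deletion_pair (isLowerSet_deletion hA E) hab
      ⟨he_mem, fun e' he' h => hE_union e' he' (by rwa [Finset.union_eq_left.2 h])⟩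
      (ih hE (hE_pairwise.mono (subset_insert _ _)) hlink.2) ?_
    rw [link_deletion hA hE_union]
    exact hlink.1

end EdgeDeletion

section IndependenceComplex

variable {V : Type*} {G : SimpleGraph V} {W S T : Set V} {m : ℤ}

/-- The faces of the independence complex of `G` with all vertices in `W`. As a complex on the
vertex set of `G`, this is the independence complex of the subgraph induced on `W`. -/
def indepFacesOn (G : SimpleGraph V) (W : Set V) : Set (Finset V) := {s ∈ indepFaces G | ↑s ⊆ W}

theorem isLowerSet_indepFacesOn : IsLowerSet (indepFacesOn G W) := fun _ _ hts hs =>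
  ⟨fun a ha b hb => hs.1 a (hts ha) b (hts hb), (Finset.coe_subset.2 hts).trans hs.2⟩

theorem indepFacesOn_inter (U W : Set V) :
    indepFacesOn G (U ∩ W) = indepFacesOn G U ∩ indepFacesOn G W := by
  ext s
  simp only [indepFacesOn, mem_inter_iff, mem_ofPred_eq, subset_inter_iff]
  tauto

theorem image_map_subtype_indepFaces_induce (G : SimpleGraph V) (W : Set V) :
    Finset.map (.subtype (· ∈ W)) '' indepFaces (G.induce W) = indepFacesOn G W := by
  classical
  ext s
  constructor
  · rintro ⟨t, ht, rfl⟩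
    refine ⟨fun a ha b hb => ?_, fun x hx => Finset.property_of_mem_map_subtype t hx⟩
    obtain ⟨a, hat, rfl⟩ := Finset.mem_map.1 ha
    obtain ⟨b, hbt, rfl⟩ := Finset.mem_map.1 hb
    exact ht a hat b hbt
  · rintro ⟨hs, hsW⟩
    exact ⟨s.subtype (· ∈ W), fun a ha b hb =>
      hs a (Finset.mem_subtype.1 ha) b (Finset.mem_subtype.1 hb), Finset.subtype_map_of_mem hsW⟩

theorem IsNConnected.realization_indepFacesOn
    (h : IsNConnected m (realization (indepFaces (G.induce W)))) :
    IsNConnected m (realization (indepFacesOn G W)) :=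
  image_map_subtype_indepFaces_induce G W ▸ h.realization_image_map _

theorem indepFaces_eq_union_of_neighborSet_eq_pair {u v₁ v₂ : V}
    (hNu : G.neighborSet u = {v₁, v₂}) :
    indepFaces G = (indepFacesOn G (G.neighborSet v₁)ᶜ ∪ indepFacesOn G (G.neighborSet v₂)ᶜ) ∪
      indepFacesOn G (G.neighborSet u)ᶜ := by
  refine Subset.antisymm (fun s hs => ?_)
    (union_subset (union_subset (sep_subset _ _) (sep_subset _ _)) (sep_subset _ _))
  by_cases h₁ : v₁ ∈ s
  · exact .inl (.inl ⟨hs, hs v₁ h₁⟩)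
  by_cases h₂ : v₂ ∈ s
  · exact .inl (.inr ⟨hs, hs v₂ h₂⟩)
  refine .inr ⟨hs, fun x hx hxu => ?_⟩
  rcases hNu.subset hxu with rfl | rfl
  exacts [h₁ hx, h₂ hx]

theorem compl_closedNbhd_union_inter_compl_neighborSet {u v : V} (huv : G.Adj u v)
    (hT : T ⊆ G.neighborSet v) :
    (G.closedNbhd u ∪ T)ᶜ ∩ (G.neighborSet v)ᶜ = (G.neighborSet u)ᶜ ∩ (G.neighborSet v)ᶜ := by
  rw [← compl_union, ← compl_union, SimpleGraph.closedNbhd, union_assoc,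
    union_eq_self_of_subset_left hT, insert_union, insert_eq_of_mem (.inr huv.symm)]

theorem compl_closedNbhd_union_inter_diff_closedNbhd {u v₁ v₂ a b : V}
    (hNu : G.neighborSet u = {v₁, v₂}) (hc₁ : G.IsClique (G.neighborSet v₁ \ {u}))
    (ha : a ∈ G.neighborSet v₁ \ {u}) (hb : b ∈ G.neighborSet v₂ \ {u}) :
    (G.closedNbhd u ∪ (G.neighborSet v₁ ∩ G.neighborSet v₂))ᶜ \
        (G.closedNbhd a ∪ G.closedNbhd b) =
      (G.closedNbhd a ∪ G.closedNbhd b ∪ {u})ᶜ := by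
  have hinter : G.neighborSet v₁ ∩ G.neighborSet v₂ ⊆ insert u (G.closedNbhd a) := by
    intro x hx
    by_cases hxu : x = u
    · exact .inl hxu
    by_cases hxa : x = a
    · exact .inr (.inl hxa)
    exact .inr (.inr (hc₁ ha ⟨hx.1, hxu⟩ (Ne.symm hxa)))
  have hNu_sub : G.neighborSet u ⊆ G.closedNbhd a ∪ G.closedNbhd b := by
    rw [hNu]
    exact pair_subset (.inl (.inr ha.1.symm)) (.inr (.inr hb.1.symm))
  ext x
  have := @hinter x
  have := @hNu_sub x
  simp only [SimpleGraph.closedNbhd, mem_sdiff, mem_compl_iff, mem_union, mem_insert_iff,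
    mem_singleton_iff] at *
  tauto

section DecidableEq

variable [DecidableEq V]

theorem insert_mem_indepFacesOn {v : V} {s : Finset V} (hs : s ∈ indepFacesOn G W) (hv : v ∈ W)
    (hsv : ↑s ⊆ (G.neighborSet v)ᶜ) : insert v s ∈ indepFacesOn G W := by
  refine ⟨fun a ha b hb hab => ?_, by simpa [insert_subset_iff, hv] using hs.2⟩
  rw [Finset.mem_insert] at ha hb
  rcases ha with rfl | ha <;> rcases hb with rfl | hb
  exacts [hab.ne rfl, hsv hb hab, hsv ha hab.symm, hs.1 a ha b hb hab]

theorem link_indepFacesOn {e : Finset V} (he : e ∈ indepFacesOn G W) :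
    link (indepFacesOn G W) e = indepFacesOn G (W \ ⋃ a ∈ e, G.closedNbhd a) := by
  ext s
  constructor
  · rintro ⟨hs, hse⟩
    refine ⟨fun a ha b hb => hs.1 a (Finset.mem_union_left e ha) b (Finset.mem_union_left e hb),
      fun x hx => ⟨hs.2 (Finset.mem_union_left e hx), fun hxe => ?_⟩⟩
    obtain ⟨a, ha, rfl | hxa⟩ := mem_iUnion₂.1 hxe
    · exact Finset.disjoint_left.1 hse hx ha
    · exact hs.1 a (Finset.mem_union_right s ha) x (Finset.mem_union_left e hx) hxa
  · rintro ⟨hs, hsW⟩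
    have hse {x a : V} (hx : x ∈ s) (ha : a ∈ e) : x ∉ G.closedNbhd a :=
      fun h => (hsW hx).2 (mem_iUnion₂.2 ⟨a, ha, h⟩)
    refine ⟨⟨fun a ha b hb hab => ?_, ?_⟩,
      Finset.disjoint_left.2 fun x hx hxe => hse hx hxe (mem_insert _ _)⟩
    · rcases Finset.mem_union.1 ha with ha | ha <;> rcases Finset.mem_union.1 hb with hb | hb
      exacts [hs a ha b hb hab, hse ha hb (.inr hab.symm), hse hb ha (.inr hab),
        he.1 a ha b hb hab]
    · rw [Finset.coe_union]
      exact union_subset (hsW.trans sdiff_subset) he.2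

/-- The faces of `A` spanned by a vertex in `S` and a vertex in `T`. -/
def crossPairs (A : Set (Finset V)) (S T : Set V) : Set (Finset V) :=
  {e ∈ A | ∃ a ∈ S, ∃ b ∈ T, e = {a, b}}

theorem deletion_crossPairs_indepFacesOn :
    deletion (indepFacesOn G W) (crossPairs (indepFacesOn G W) S T) =
      indepFacesOn G (W ∩ Sᶜ) ∪ indepFacesOn G (W ∩ Tᶜ) := by
  ext s
  constructor
  · rintro ⟨hs, hsE⟩
    by_contra! h
    obtain ⟨hS, hT⟩ := not_or.1 h
    obtain ⟨a, has, haS⟩ : ∃ a ∈ s, a ∈ S := by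
      by_contra! h
      exact hS ⟨hs.1, fun a ha => ⟨hs.2 ha, h a ha⟩⟩
    obtain ⟨b, hbs, hbT⟩ : ∃ b ∈ s, b ∈ T := by
      by_contra! h
      exact hT ⟨hs.1, fun a ha => ⟨hs.2 ha, h a ha⟩⟩
    have hsub : {a, b} ⊆ s := by simp [Finset.insert_subset_iff, has, hbs]
    exact hsE _ ⟨isLowerSet_indepFacesOn hsub hs, a, haS, b, hbT, rfl⟩ hsub
  · rw [indepFacesOn_inter, indepFacesOn_inter]
    rintro (⟨hs, -, hsS⟩ | ⟨hs, -, hsT⟩)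
    · refine ⟨hs, ?_⟩
      rintro _ ⟨-, a, haS, b, -, rfl⟩ h
      exact hsS (h (by simp)) haS
    · refine ⟨hs, ?_⟩
      rintro _ ⟨-, a, -, b, hbT, rfl⟩ h
      exact hsT (h (by simp)) hbT

theorem card_eq_two_of_mem_crossPairs (hST : Disjoint (W ∩ S) T) {e : Finset V}
    (he : e ∈ crossPairs (indepFacesOn G W) S T) : e.card = 2 := by
  obtain ⟨he, a, haS, b, hbT, rfl⟩ := he
  refine Finset.card_pair ?_
  rintro rfl
  exact disjoint_left.1 hST ⟨he.2 (by simp), haS⟩ hbT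

theorem pairwise_crossPairs_union_notMem (hS : G.IsClique (W ∩ S)) (hT : G.IsClique (W ∩ T)) :
    (crossPairs (indepFacesOn G W) S T).Pairwise fun e e' => e ∪ e' ∉ indepFacesOn G W := by
  have heq {R : Set V} (hR : G.IsClique (W ∩ R)) {s : Finset V} (hs : s ∈ indepFacesOn G W)
      {x y : V} (hx : x ∈ s) (hy : y ∈ s) (hxR : x ∈ R) (hyR : y ∈ R) : x = y :=
    of_not_not fun hxy => hs.1 x hx y hy (hR ⟨hs.2 hx, hxR⟩ ⟨hs.2 hy, hyR⟩ hxy)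
  rintro _ ⟨-, a, ha, b, hb, rfl⟩ _ ⟨-, a', ha', b', hb', rfl⟩ hne hunion
  obtain rfl := heq hS hunion (by simp) (by simp) ha ha'
  obtain rfl := heq hT hunion (by simp) (by simp) hb hb'
  exact hne rfl

end DecidableEq

variable [Finite V]

theorem IsNConnected.realization_indepFacesOn_union_of_isClique (hST : Disjoint (W ∩ S) T)
    (hS : G.IsClique (W ∩ S)) (hT : G.IsClique (W ∩ T))
    (hW : IsNConnected m (realization (indepFacesOn G W)))
    (hlink : ∀ a ∈ W ∩ S, ∀ b ∈ W ∩ T, ¬ G.Adj a b →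
      IsNConnected (m - 1)
        (realization (indepFacesOn G (W \ (G.closedNbhd a ∪ G.closedNbhd b))))) :
    IsNConnected m (realization (indepFacesOn G (W ∩ Sᶜ) ∪ indepFacesOn G (W ∩ Tᶜ))) := by
  classical
  rw [← deletion_crossPairs_indepFacesOn]
  refine .realization_deletion isLowerSet_indepFacesOn
    (fun e he => ⟨he.1, card_eq_two_of_mem_crossPairs hST he⟩)
    (pairwise_crossPairs_union_notMem hS hT) hW ?_
  rintro _ ⟨he, a, ha, b, hb, rfl⟩
  rw [link_indepFacesOn he, Finset.set_biUnion_insert, Finset.set_biUnion_singleton]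
  exact hlink a ⟨he.2 (by simp), ha⟩ b ⟨he.2 (by simp), hb⟩ (he.1 a (by simp) b (by simp))

theorem isNConnected_realization_indepFacesOn_of_subset_compl_neighborSet {v : V} (hv : v ∈ W)
    (hW : W ⊆ (G.neighborSet v)ᶜ) : IsNConnected m (realization (indepFacesOn G W)) := by
  classical
  exact isNConnected_realization_of_forall_insert_mem isLowerSet_indepFacesOn
    ⟨∅, by simp [indepFacesOn, indepFaces]⟩
    fun _ hs => insert_mem_indepFacesOn hs hv (hs.2.trans hW)

theorem isNConnected_realization_indepFaces_of_neighborSet_eq_pair {u v₁ v₂ : V}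
    (hnadj : ¬ G.Adj v₁ v₂) (hNu : G.neighborSet u = {v₁, v₂})
    (h : IsNConnected (m - 1) (realization
      (indepFacesOn G ((G.neighborSet u)ᶜ ∩ (G.neighborSet v₁)ᶜ) ∪
        indepFacesOn G ((G.neighborSet u)ᶜ ∩ (G.neighborSet v₂)ᶜ)))) :
    IsNConnected m (realization (indepFaces G)) := by
  have hstar (v : V) : IsNConnected m (realization (indepFacesOn G (G.neighborSet v)ᶜ)) :=
    isNConnected_realization_indepFacesOn_of_subset_compl_neighborSet (v := v) (by simp) le_rfl
  rw [indepFaces_eq_union_of_neighborSet_eq_pair hNu]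
  refine .realization_union (isLowerSet_indepFacesOn.union isLowerSet_indepFacesOn)
    isLowerSet_indepFacesOn (.realization_union isLowerSet_indepFacesOn isLowerSet_indepFacesOn
      (hstar v₁) (hstar v₂) ?_) (hstar u) ?_
  · rw [← indepFacesOn_inter]
    exact isNConnected_realization_indepFacesOn_of_subset_compl_neighborSet (v := v₁)
      ⟨by simp, fun h => hnadj h.symm⟩ inter_subset_left
  · rwa [inter_comm, inter_union_distrib_left, ← indepFacesOn_inter, ← indepFacesOn_inter]

end IndependenceComplex

/-- Let `u, v₁, v₂` be three vertices with `{v₁,v₂} ∉ E(G)`,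
`N(u) = {v₁,v₂}`, and `G[N(v₁) \ {u}]`, `G[N(v₂) \ {u}]` complete. If
`Ind(G \ (Ṅ(u) ∪ (N(v₁) ∩ N(v₂))))` is `(n-1)`-connected and
`Ind(G \ (Ṅ(w₁) ∪ Ṅ(w₂) ∪ {u}))` is `(n-2)`-connected for every edge `{w₁,w₂}` of the
complement of `G[N(v₁) ∪ N(v₂) \ {u}]`, then `Ind(G)` is `n`-connected. -/
theorem indComplex_nconnected_of_two_complete_nbhds {V : Type*} [Fintype V]
    (G : SimpleGraph V) (u v₁ v₂ : V) (n : ℤ)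
    (hne : v₁ ≠ v₂) (hnadj : ¬ G.Adj v₁ v₂)
    (hNu : G.neighborSet u = {v₁, v₂})
    (hc₁ : G.induce (G.neighborSet v₁ \ {u}) = ⊤)
    (hc₂ : G.induce (G.neighborSet v₂ \ {u}) = ⊤)
    (hA : IsNConnected (n - 1) (realization (indepFaces (G.induce
      (G.closedNbhd u ∪ (G.neighborSet v₁ ∩ G.neighborSet v₂))ᶜ))))
    (hB : ∀ w₁ w₂ : V,
      w₁ ∈ (G.neighborSet v₁ ∪ G.neighborSet v₂) \ {u} →
      w₂ ∈ (G.neighborSet v₁ ∪ G.neighborSet v₂) \ {u} →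
      w₁ ≠ w₂ → ¬ G.Adj w₁ w₂ →
      IsNConnected (n - 2) (realization (indepFaces (G.induce
        (G.closedNbhd w₁ ∪ G.closedNbhd w₂ ∪ {u})ᶜ)))) :
    IsNConnected n (realization (indepFaces G)) := by
  have hv₁ : G.Adj u v₁ := hNu.superset (mem_insert v₁ {v₂})
  have hv₂ : G.Adj u v₂ := hNu.superset (mem_insert_of_mem v₁ rfl)
  rw [SimpleGraph.induce_eq_top] at hc₁ hc₂
  refine isNConnected_realization_indepFaces_of_neighborSet_eq_pair hnadj hNu ?_
  rw [← compl_closedNbhd_union_inter_compl_neighborSet hv₁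
      (inter_subset_left (t := G.neighborSet v₂)),
    ← compl_closedNbhd_union_inter_compl_neighborSet hv₂
      (inter_subset_right (s := G.neighborSet v₁))]
  have hsub {v x : V} (hx : x ∈ (G.closedNbhd u ∪ (G.neighborSet v₁ ∩ G.neighborSet v₂))ᶜ ∩
      G.neighborSet v) : x ∈ G.neighborSet v \ {u} :=
    ⟨hx.2, fun h => hx.1 (.inl (.inl h))⟩
  refine .realization_indepFacesOn_union_of_isClique
    (disjoint_left.2 fun x hx hx₂ => hx.1 (.inr ⟨hx.2, hx₂⟩))
    (hc₁.subset fun x => hsub) (hc₂.subset fun x => hsub) hA.realization_indepFacesOn ?_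
  intro a ha b hb hab
  rw [compl_closedNbhd_union_inter_diff_closedNbhd hNu hc₁ (hsub ha) (hsub hb),
    sub_sub, one_add_one_eq_two]
  have hne_ab : a ≠ b := fun h => ha.1 (.inr ⟨ha.2, h ▸ hb.2⟩)
  have hconn := hB a b ⟨.inl ha.2, (hsub ha).2⟩ ⟨.inr hb.2, (hsub hb).2⟩ hne_ab hab
  exact hconn.realization_indepFacesOn
end

section
/- If G is a claw-free graph with n vertices and maximal degree d, then the independence complex Ind(G) is ⌊(2n−1)/(3d+2) − 1⌋-connected. -/
open SimpleGraph

/-!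
A map into `Ind(G)` given on a closed subset of a space `Z` is extended to `Z` by induction on the
large inductive dimension of `Z`. For a vertex `v`, the complex is the union of the open star of
`v`, which is contractible, and the set of points different from `v`, which deforms onto the
deletion of `v`; the two sets meet in a thickened copy of the link of `v`. Splitting `Z` along a
partition of smaller dimension reduces the extension problem to the link of `v` in the smaller
dimension and to the deletion of `v`.

Deleting all neighbours of a vertex `u` turns the complex into a cone. In a claw-free graph two
nonadjacent neighbours of `u` have no common non-neighbour among the neighbours of `u`, so every set
of neighbours of `u` has a member nonadjacent to at most half of it. Deleting the neighbours in a
suitable order, each link therefore misses at most `(3d + 2) / 2` of the vertices, and one dimension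
is paid for by `(3d + 2) / 2` vertices.
-/

open Set Metric Topology

/-! ### Large inductive dimension -/

/-- `IndDimLT j Z` says that the large inductive dimension of the closed set `Z` is less than `j`:
disjoint closed subsets of `Z` are separated by a partition `P ∩ Q` of smaller dimension, where the
closed sets `P` and `Q` cover `Z`. -/
def IndDimLT {M : Type*} [TopologicalSpace M] : ℕ → Set M → Prop
  | 0, Z => Z = ∅
  | j + 1, Z => ∀ C D : Set M, IsClosed C → IsClosed D → C ⊆ Z → D ⊆ Z → Disjoint C D →
      ∃ P Q : Set M, IsClosed P ∧ IsClosed Q ∧ P ∪ Q = Z ∧ Disjoint C Q ∧ Disjoint D P ∧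
        IndDimLT j (P ∩ Q)

theorem IndDimLT.mono {M : Type*} [TopologicalSpace M] {j : ℕ} {Z Z' : Set M}
    (h : IndDimLT j Z) (hZ' : IsClosed Z') (hsub : Z' ⊆ Z) : IndDimLT j Z' := by
  induction j generalizing Z Z' with
  | zero => exact subset_empty_iff.1 (hsub.trans_eq h)
  | succ j ih =>
    intro C D hC hD hCZ hDZ hCD
    obtain ⟨P, Q, hP, hQ, rfl, hCQ, hDP, hdim⟩ :=
      h C D hC hD (hCZ.trans hsub) (hDZ.trans hsub) hCD
    refine ⟨P ∩ Z', Q ∩ Z', hP.inter hZ', hQ.inter hZ', ?_, hCQ.mono_right inter_subset_left,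
      hDP.mono_right inter_subset_left, ih hdim ((hP.inter hZ').inter (hQ.inter hZ')) ?_⟩
    · rw [← union_inter_distrib_right, inter_eq_right.2 hsub]
    · exact inter_subset_inter inter_subset_left inter_subset_left

theorem exists_translate_notMem {S : Set ℝ} (hS : S.Countable) (ε : ℝ) :
    ∃ a : ℝ, ∀ k : ℤ, a + k * ε ∉ S := by
  have hcount : (⋃ k : ℤ, (fun s => s - k * ε) '' S).Countable :=
    countable_iUnion fun k => hS.image _
  obtain ⟨a, ha⟩ := (hcount.dense_compl ℝ).nonempty
  refine ⟨a, fun k hk => ha (mem_iUnion.2 ⟨k, _, hk, ?_⟩)⟩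
  ring

theorem eventually_floor_eq {X : Type*} [TopologicalSpace X] {f : X → ℝ} {x : X}
    (hf : ContinuousAt f x) (hx : ∀ k : ℤ, f x ≠ k) : ∀ᶠ y in 𝓝 x, ⌊f y⌋ = ⌊f x⌋ := by
  filter_upwards [hf.eventually_mem (Ioo_mem_nhds ((Int.floor_le (f x)).lt_of_ne' (hx _))
    (Int.lt_floor_add_one (f x)))] with y hy
  exact Int.floor_eq_iff.2 ⟨hy.1.le, hy.2⟩

/-- A neighbourhood of `C` made of cells of a fine grid has its frontier on the grid, and the grid
can be placed so that it avoids countably many prescribed coordinates. -/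
theorem exists_grid_neighborhood {ι : Type*} [Finite ι] {S : Set ℝ} (hS : S.Countable)
    {C D : Set (ι → ℝ)} (hC : IsCompact C) (hD : IsClosed D) (hCD : Disjoint C D) :
    ∃ U : Set (ι → ℝ), ∃ T : Set ℝ, C ⊆ interior U ∧ Disjoint D (closure U) ∧ T.Countable ∧
      Disjoint S T ∧ ∀ z ∈ frontier U, ∃ i, z i ∈ T := by
  have := Fintype.ofFinite ι
  obtain ⟨δ, hδ, hδCD⟩ := hCD.exists_cthickenings hC hD
  obtain ⟨r, hr, rfl⟩ : ∃ r : ℝ, 0 < r ∧ δ = r + (r + r) := ⟨δ / 3, by positivity, by ring⟩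
  obtain ⟨a, ha⟩ := exists_translate_notMem hS r
  let corner : (ι → ℝ) → ι → ℝ := fun z i => a + ⌊(z i - a) / r⌋ * r
  have hcorner (z) : dist z (corner z) ≤ r := (dist_pi_le_iff hr.le).2 fun i => by
    have hle := (le_div_iff₀ hr).1 (Int.floor_le ((z i - a) / r))
    have hlt := (div_lt_iff₀ hr).1 (Int.lt_floor_add_one ((z i - a) / r))
    rw [Real.dist_eq, abs_le]
    constructor <;> linarith
  refine ⟨corner ⁻¹' cthickening (r + r) C, range fun k : ℤ => a + k * r, ?_, ?_,
    countable_range _, ?_, fun z hz => ?_⟩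
  · refine (self_subset_thickening hr C).trans (interior_maximal (fun z hz => ?_)
      isOpen_thickening)
    obtain ⟨c, hc, hzc⟩ := mem_thickening_iff.1 hz
    refine mem_cthickening_of_dist_le _ c _ _ hc ((dist_triangle_left _ _ z).trans ?_)
    exact add_le_add (hcorner z) hzc.le
  · have hsub : corner ⁻¹' cthickening (r + r) C ⊆ cthickening (r + (r + r)) C := fun z hz =>
      cthickening_cthickening_subset hr.le (by positivity) C
        (mem_cthickening_of_dist_le z _ r _ hz (hcorner z))
    exact (hδCD.mono (closure_minimal hsub isClosed_cthickening)
      (self_subset_cthickening D)).symm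
  · rw [Set.disjoint_right]
    rintro _ ⟨k, rfl⟩
    exact ha k
  · by_contra! hz_off
    have hconst : ∀ᶠ y in 𝓝 z, corner y = corner z := by
      have hfloor (i : ι) : ∀ᶠ y in 𝓝 z, ⌊(y i - a) / r⌋ = ⌊(z i - a) / r⌋ :=
        eventually_floor_eq (f := fun y : ι → ℝ => (y i - a) / r)
          (Continuous.continuousAt (by fun_prop)) fun k hk =>
            hz_off i ⟨k, (sub_eq_iff_eq_add'.1 ((div_eq_iff hr.ne').1 hk)).symm⟩
      filter_upwards [Filter.eventually_all.2 hfloor] with y hy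
      simp only [corner, hy]
    rw [frontier_eq_closure_inter_closure, mem_inter_iff, mem_closure_iff_frequently,
      mem_closure_iff_frequently] at hz
    obtain ⟨y, hyU, hy⟩ := (hz.1.and_eventually hconst).exists
    obtain ⟨y', hyU', hy'⟩ := (hz.2.and_eventually hconst).exists
    exact hyU' (by rwa [mem_preimage, hy', ← hy])

/-- Each partition along a grid that avoids the earlier grids puts one more coordinate into the
countable set `S`, so that `j` successive partitions leave nothing. -/
theorem indDimLT_of_forall_ncard_lt {M ι : Type*} [TopologicalSpace M] [T2Space M] [Finite ι]
    {φ : M → ι → ℝ} {Z : Set M} (hZ : IsCompact Z) (hφ : ContinuousOn φ Z) (hinj : InjOn φ Z)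
    {S : Set ℝ} (hS : S.Countable) {j : ℕ} (hcard : ∀ z ∈ Z, {i | φ z i ∉ S}.ncard < j) :
    IndDimLT j Z := by
  induction j generalizing Z S with
  | zero => exact eq_empty_of_forall_notMem fun z hz => absurd (hcard z hz) (Nat.not_lt_zero _)
  | succ j ih =>
    intro C D hC hD hCZ hDZ hCD
    have himage {K : Set M} (hK : IsClosed K) (hKZ : K ⊆ Z) : IsCompact (φ '' K) :=
      (hZ.of_isClosed_subset hK hKZ).image_of_continuousOn (hφ.mono hKZ)
    obtain ⟨U, T, hCU, hDU, hT, hST, hfrontier⟩ := exists_grid_neighborhood hS (himage hC hCZ)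
      (himage hD hDZ).isClosed (hCD.image hinj hCZ hDZ)
    have hP := hφ.preimage_isClosed_of_isClosed hZ.isClosed (isClosed_closure (s := U))
    have hQ := hφ.preimage_isClosed_of_isClosed hZ.isClosed (isClosed_closure (s := Uᶜ))
    have hPQ : (Z ∩ φ ⁻¹' closure U) ∩ (Z ∩ φ ⁻¹' closure Uᶜ) ⊆ Z := fun z hz => hz.1.1
    refine ⟨_, _, hP, hQ, ?_, ?_, ?_, ih (hZ.of_isClosed_subset (hP.inter hQ) hPQ) (hφ.mono hPQ)
      (hinj.mono hPQ) (hS.union hT) ?_⟩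
    · rw [← inter_union_distrib_left, ← preimage_union, inter_eq_left]
      intro z _
      exact (em (φ z ∈ U)).imp (subset_closure ·) (subset_closure ·)
    · rw [Set.disjoint_left]
      rintro z hz ⟨-, hzU⟩
      rw [closure_compl] at hzU
      exact hzU (hCU (mem_image_of_mem φ hz))
    · rw [Set.disjoint_left]
      rintro z hz ⟨-, hzU⟩
      exact Set.disjoint_left.1 hDU (mem_image_of_mem φ hz) hzU
    · rintro z ⟨⟨hzZ, hzU⟩, -, hzU'⟩
      obtain ⟨i, hi⟩ := hfrontier (φ z) (frontier_eq_closure_inter_closure.ge ⟨hzU, hzU'⟩)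
      have hlt : {i | φ z i ∉ S ∪ T}.ncard < {i | φ z i ∉ S}.ncard := by
        refine ncard_lt_ncard ⟨fun k hk hkS => hk (.inl hkS), fun hsub => ?_⟩
        exact hsub (show i ∈ {i | φ z i ∉ S} from Set.disjoint_right.1 hST hi) (.inr hi)
      exact hlt.trans_le (Nat.lt_succ_iff.1 (hcard z hzZ))

theorem indDimLT_euclideanSpace_of_isCompact {N : ℕ} {Z : Set (EuclideanSpace ℝ (Fin N))}
    (hZ : IsCompact Z) : IndDimLT (N + 1) Z :=
  indDimLT_of_forall_ncard_lt hZ (PiLp.continuous_ofLp 2 _).continuousOn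
    (WithLp.ofLp_injective 2).injOn countable_empty fun _ _ =>
    Nat.lt_succ_iff.2 <| (ncard_le_card _).trans_eq (Nat.card_fin N)

/-! ### Extension of maps from closed sets of bounded dimension -/

theorem exists_continuousOn_union_of_eqOn {X Y : Type*} [TopologicalSpace X] [TopologicalSpace Y]
    {P Q : Set X} (hP : IsClosed P) (hQ : IsClosed Q) {a b : X → Y} (ha : ContinuousOn a P)
    (hb : ContinuousOn b Q) (hab : EqOn a b (P ∩ Q)) :
    ∃ c : X → Y, ContinuousOn c (P ∪ Q) ∧ EqOn c a P ∧ EqOn c b Q := by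
  classical
  have hca : EqOn (P.piecewise a b) a P := piecewise_eqOn _ _ _
  have hcb : EqOn (P.piecewise a b) b Q := fun x hx => by
    by_cases h : x ∈ P
    · rw [hca h, hab ⟨h, hx⟩]
    · exact piecewise_eq_of_notMem _ _ _ h
  exact ⟨_, (ha.congr hca).union_of_isClosed (hb.congr hcb) hP hQ, hca, hcb⟩

/-- `X` is an absolute extensor for closed subsets `Z` of `M` of dimension less than `j`: every
map to `X` from a closed subset of `Z` extends to `Z`. When `M` is the Euclidean space of dimension
`N` and `j = N + 1`, this implies that `X` is `(N - 1)`-connected. -/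
def ExtendsBelow (M : Type*) [TopologicalSpace M] (j : ℕ) {E : Type*} [TopologicalSpace E]
    (X : Set E) : Prop :=
  ∀ Z W : Set M, IsClosed Z → IndDimLT j Z → IsClosed W → W ⊆ Z →
    ∀ f : M → E, ContinuousOn f W → MapsTo f W X →
      ∃ g : M → E, ContinuousOn g Z ∧ MapsTo g Z X ∧ EqOn g f W

section ExtendsBelow

universe u

variable {M : Type u} {E F : Type*} [TopologicalSpace M] [TopologicalSpace E] [TopologicalSpace F]
  {j : ℕ}

theorem extendsBelow_zero (X : Set E) : ExtendsBelow M 0 X := by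
  rintro Z W - rfl - hWZ f - -
  exact ⟨f, continuousOn_empty f, mapsTo_empty f X, fun x hx => (hWZ hx).elim⟩

theorem extendsBelow_singleton (p : E) : ExtendsBelow M j {p} :=
  fun _ _ _ _ _ _ _ _ hfp =>
    ⟨fun _ => p, continuousOn_const, fun _ _ => rfl, fun _ hx => (hfp hx).symm⟩

theorem ExtendsBelow.exists_continuousMap [Nonempty E] {X : Set E} (hX : ExtendsBelow M j X)
    {Z W : Set M} (hZ : IsClosed Z) (hdim : IndDimLT j Z) (hW : IsClosed W) (hWZ : W ⊆ Z)
    (f : C(W, X)) : ∃ g : C(Z, X), ∀ x (hx : x ∈ W), g ⟨x, hWZ hx⟩ = f ⟨x, hx⟩ := by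
  classical
  let f' : M → E := fun x => if hx : x ∈ W then f ⟨x, hx⟩ else Classical.arbitrary E
  have hf' (x : M) (hx : x ∈ W) : f' x = f ⟨x, hx⟩ := dif_pos hx
  have hf'_cont : ContinuousOn f' W := by
    rw [continuousOn_iff_continuous_domRestrict]
    exact (continuous_subtype_val.comp f.continuous).congr fun x => (hf' x x.2).symm
  obtain ⟨g, hg, hgX, hgf⟩ := hX Z W hZ hdim hW hWZ f' hf'_cont fun x hx => by
    rw [hf' x hx]
    exact (f ⟨x, hx⟩).2
  refine ⟨⟨hgX.restrict g Z X, hg.mapsToRestrict hgX⟩, fun x hx => Subtype.ext ?_⟩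
  exact (hgf hx).trans (hf' x hx)

/-- The analogue of the Mayer–Vietoris sequence: partition the domain so that one side has to be
mapped to `U` and the other to `V`, extend first over the partition, then over both sides. -/
theorem ExtendsBelow.inter_union {X U V : Set E} (hU : IsOpen U) (hV : IsOpen V)
    (hXU : ExtendsBelow M (j + 1) (X ∩ U)) (hXV : ExtendsBelow M (j + 1) (X ∩ V))
    (hXUV : ExtendsBelow M j (X ∩ (U ∩ V))) : ExtendsBelow M (j + 1) (X ∩ (U ∪ V)) := by
  intro Z W hZ hdim hW hWZ f hf hfX
  obtain ⟨P, Q, hP, hQ, rfl, hPV, hQU, hdimPQ⟩ := hdim (W ∩ f ⁻¹' Vᶜ) (W ∩ f ⁻¹' Uᶜ)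
    (hf.preimage_isClosed_of_isClosed hW hV.isClosed_compl)
    (hf.preimage_isClosed_of_isClosed hW hU.isClosed_compl)
    (inter_subset_left.trans hWZ) (inter_subset_left.trans hWZ)
    (Set.disjoint_left.2 fun x hxV hxU => (hfX hxV.1).2.elim hxU.2 hxV.2)
  have hfU : MapsTo f (P ∩ W) (X ∩ U) := fun x hx =>
    ⟨(hfX hx.2).1, by_contra fun h => Set.disjoint_left.1 hQU ⟨hx.2, h⟩ hx.1⟩
  have hfV : MapsTo f (Q ∩ W) (X ∩ V) := fun x hx =>
    ⟨(hfX hx.2).1, by_contra fun h => Set.disjoint_left.1 hPV ⟨hx.2, h⟩ hx.1⟩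
  obtain ⟨e, he, heX, hef⟩ := hXUV (P ∩ Q) (P ∩ Q ∩ W) (hP.inter hQ) hdimPQ
    ((hP.inter hQ).inter hW) inter_subset_left f (hf.mono inter_subset_right) fun x hx =>
      ⟨(hfX hx.2).1, (hfU ⟨hx.1.1, hx.2⟩).2, (hfV ⟨hx.1.2, hx.2⟩).2⟩
  obtain ⟨c, hc, hce, hcf⟩ := exists_continuousOn_union_of_eqOn (hP.inter hQ) hW he hf hef
  have hW' : IsClosed (P ∩ Q ∪ W) := (hP.inter hQ).union hW
  have hcU : MapsTo c (P ∩ (P ∩ Q ∪ W)) (X ∩ U) := by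
    rintro x ⟨hxP, hx | hx⟩
    · exact hce hx ▸ ⟨(heX hx).1, (heX hx).2.1⟩
    · exact hcf hx ▸ hfU ⟨hxP, hx⟩
  have hcV : MapsTo c (Q ∩ (P ∩ Q ∪ W)) (X ∩ V) := by
    rintro x ⟨hxQ, hx | hx⟩
    · exact hce hx ▸ ⟨(heX hx).1, (heX hx).2.2⟩
    · exact hcf hx ▸ hfV ⟨hxQ, hx⟩
  obtain ⟨a, ha, haX, hac⟩ := hXU P _ hP (hdim.mono hP subset_union_left) (hP.inter hW')
    inter_subset_left c (hc.mono inter_subset_right) hcU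
  obtain ⟨b, hb, hbX, hbc⟩ := hXV Q _ hQ (hdim.mono hQ subset_union_right) (hQ.inter hW')
    inter_subset_left c (hc.mono inter_subset_right) hcV
  obtain ⟨g, hg, hga, hgb⟩ := exists_continuousOn_union_of_eqOn hP hQ ha hb fun x hx =>
    (hac ⟨hx.1, .inl hx⟩).trans (hbc ⟨hx.2, .inl hx⟩).symm
  refine ⟨g, hg, ?_, fun x hxW => ?_⟩
  · rintro x (hx | hx)
    · exact hga hx ▸ ⟨(haX hx).1, .inl (haX hx).2⟩
    · exact hgb hx ▸ ⟨(hbX hx).1, .inr (hbX hx).2⟩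
  · rcases hWZ hxW with hx | hx
    · rw [hga hx, hac ⟨hx, .inr hxW⟩, hcf hxW]
    · rw [hgb hx, hbc ⟨hx, .inr hxW⟩, hcf hxW]

theorem exists_collar_extension [NormalSpace M] {C U : Set E} [TietzeExtension.{u} C]
    (hU : IsOpen U) {W : Set M} (hW : IsClosed W) {f : M → E} (hf : ContinuousOn f W)
    (hfU : MapsTo f W (C ∩ U)) :
    ∃ (t : C(M, ℝ)) (g : M → E), (∀ x, 0 ≤ t x) ∧ EqOn t 0 W ∧ Continuous g ∧
      MapsTo g {x | t x ≤ 1} (C ∩ U) ∧ EqOn g f W := by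
  have hfC : MapsTo f W C := fun x hx => (hfU hx).1
  obtain ⟨g, hg⟩ := ContinuousMap.exists_restrict_eq hW
    (⟨hfC.restrict f W C, hf.mapsToRestrict hfC⟩ : C(W, C))
  have hgf (x : M) (hx : x ∈ W) : (g x : E) = f x :=
    congrArg Subtype.val (DFunLike.congr_fun hg ⟨x, hx⟩)
  have hg_cont : Continuous fun x => (g x : E) := continuous_subtype_val.comp g.continuous
  have hWU : Disjoint W ((fun x => (g x : E)) ⁻¹' U)ᶜ :=
    disjoint_compl_right_iff_subset.2 fun x hx => by
      rw [mem_preimage, hgf x hx]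
      exact (hfU hx).2
  obtain ⟨t, ht0, ht1, ht⟩ :=
    exists_continuous_zero_one_of_isClosed hW (hU.preimage hg_cont).isClosed_compl hWU
  refine ⟨(2 : ℝ) • t, fun x => g x, fun x => ?_, fun x hx => ?_, hg_cont, fun x hx => ?_, hgf⟩
  · simpa using (ht x).1
  · simpa using ht0 hx
  · refine ⟨(g x).2, by_contra fun hxU => ?_⟩
    have htx : t x = 1 := ht1 hxU
    norm_num [htx] at hx

/-- The extension property passes from `X` to any `C ∩ U` dominated by `X` through straight-line
homotopies. The homotopy is run in a collar of the closed set from which a map is extended. -/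
theorem ExtendsBelow.of_segment_subset [NormalSpace M] [AddCommGroup E] [Module ℝ E]
    [ContinuousAdd E] [ContinuousSMul ℝ E] {C U : Set E} [TietzeExtension.{u} C] (hU : IsOpen U)
    {X : Set F} {r : E → F} {s : F → E} (hr : ContinuousOn r (C ∩ U)) (hs : ContinuousOn s X)
    (hrX : MapsTo r (C ∩ U) X) (hsU : MapsTo s X (C ∩ U))
    (hseg : ∀ y ∈ C ∩ U, segment ℝ y (s (r y)) ⊆ C ∩ U) (hX : ExtendsBelow M j X) :
    ExtendsBelow M j (C ∩ U) := by
  intro Z W hZ hdim hW hWZ f hf hfU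
  obtain ⟨t, g, ht, htW, hg, hgU, hgf⟩ := exists_collar_extension hU hW hf hfU
  let P : Set M := Z ∩ {x | t x ≤ 1}
  let Q : Set M := Z ∩ {x | 1 ≤ t x}
  have hP : IsClosed P := hZ.inter (isClosed_le t.continuous continuous_const)
  have hQ : IsClosed Q := hZ.inter (isClosed_le continuous_const t.continuous)
  have hPQ : P ∪ Q = Z := by
    rw [← inter_union_distrib_left, inter_eq_left]
    exact fun x _ => le_total (t x) 1
  have hgP : MapsTo g P (C ∩ U) := fun x hx => hgU hx.2
  have hrg : ContinuousOn (r ∘ g) P := hr.comp hg.continuousOn hgP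
  obtain ⟨k, hk, hkX, hkr⟩ := hX Q (P ∩ Q) hQ (hdim.mono hQ inter_subset_left) (hP.inter hQ)
    inter_subset_right (r ∘ g) (hrg.mono inter_subset_left) fun x hx => hrX (hgP hx.1)
  let a : M → E := fun x => (1 - t x) • g x + t x • s (r (g x))
  have ha : ContinuousOn a P :=
    ((continuousOn_const.sub t.continuous.continuousOn).smul hg.continuousOn).add
      (t.continuous.continuousOn.smul (hs.comp hrg fun x hx => hrX (hgP hx)))
  have haU : MapsTo a P (C ∩ U) := fun x hx =>
    hseg (g x) (hgP hx) ⟨1 - t x, t x, sub_nonneg.2 hx.2, ht x, sub_add_cancel _ _, rfl⟩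
  obtain ⟨h, hh, hha, hhk⟩ := exists_continuousOn_union_of_eqOn hP hQ ha (hs.comp hk hkX)
    fun x hx => by
      have htx : t x = 1 := hx.1.2.antisymm hx.2.2
      simp [a, htx, hkr hx]
  rw [hPQ] at hh
  refine ⟨h, hh, fun x hxZ => ?_, fun x hxW => ?_⟩
  · rcases hPQ.ge hxZ with hx | hx
    · exact hha hx ▸ haU hx
    · exact hhk hx ▸ hsU (hkX hx)
  · have htx : t x = 0 := htW hxW
    rw [hha ⟨hWZ hxW, htx.trans_le zero_le_one⟩]
    simp [a, htx, hgf hxW]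

theorem ExtendsBelow.of_starConvex [NormalSpace M] [AddCommGroup E] [Module ℝ E] [ContinuousAdd E]
    [ContinuousSMul ℝ E] {C U : Set E} [TietzeExtension.{u} C] (hU : IsOpen U) {p : E}
    (hp : p ∈ C ∩ U) (hstar : StarConvex ℝ p (C ∩ U)) : ExtendsBelow M j (C ∩ U) :=
  ExtendsBelow.of_segment_subset (X := {p}) (r := fun _ => p) (s := id) hU continuousOn_const
    continuousOn_id (fun _ _ => rfl) (fun _ hx => hx ▸ hp)
    (fun y hy => by
      rw [id_eq, segment_symm]
      exact starConvex_iff_segment_subset.1 hstar hy)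
    (extendsBelow_singleton p)

end ExtendsBelow

/-! ### Weights supported on independent sets -/

section IndepCone

variable {V : Type*} {G : SimpleGraph V} {A B : Set V} {v : V} {x y : V → ℝ}

/-- The cone over the realization of the independence complex of `G.induce A`, with apex `0`. The
weights are not normalized. -/
def indepCone (G : SimpleGraph V) (A : Set V) : Set (V → ℝ) :=
  {x | 0 ≤ x ∧ x.support ⊆ A ∧ G.IsIndepSet x.support}

/-- The functions that are positive at some element of `B`. -/
def somewherePos (B : Set V) : Set (V → ℝ) :=
  {x | ∃ u ∈ B, 0 < x u}

/-- The cone `indepCone G A` without its apex, a model of the independence complex of `G.induce A`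
up to homotopy. -/
def indepWeights (G : SimpleGraph V) (A : Set V) : Set (V → ℝ) :=
  indepCone G A ∩ somewherePos univ

theorem isOpen_somewherePos (B : Set V) : IsOpen (somewherePos B) := by
  have : somewherePos B = ⋃ u ∈ B, {x | 0 < x u} := by
    ext x
    simp [somewherePos]
  rw [this]
  exact isOpen_biUnion fun u _ => isOpen_lt continuous_const (continuous_apply u)

theorem somewherePos_union (B B' : Set V) :
    somewherePos (B ∪ B') = somewherePos B ∪ somewherePos B' := by
  ext x
  simp only [somewherePos, mem_ofPred_eq, mem_union, or_and_right, exists_or]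

theorem convex_nonneg_inter_somewherePos (B : Set V) :
    Convex ℝ (Ici 0 ∩ somewherePos B) := by
  rintro x ⟨hx, u, hu, hxu⟩ y ⟨hy, w, hw, hyw⟩ a b ha hb hab
  refine ⟨(convex_Ici 0) hx hy ha hb hab, ?_⟩
  rcases ha.eq_or_lt with rfl | ha
  · obtain rfl : b = 1 := by simpa using hab
    exact ⟨w, hw, by simpa using hyw⟩
  · exact ⟨u, hu, add_pos_of_pos_of_nonneg (mul_pos ha hxu) (mul_nonneg hb (hy u))⟩

theorem segment_subset_indepCone_inter (hx : x ∈ indepCone G A ∩ somewherePos B)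
    (hy : y ∈ indepCone G A ∩ somewherePos B) (hxy : G.IsIndepSet (x.support ∪ y.support)) :
    segment ℝ x y ⊆ indepCone G A ∩ somewherePos B := by
  rintro z hz
  obtain ⟨hz0, hzB⟩ := (convex_nonneg_inter_somewherePos B).segment_subset ⟨hx.1.1, hx.2⟩
    ⟨hy.1.1, hy.2⟩ hz
  have hsupp : z.support ⊆ x.support ∪ y.support := by
    obtain ⟨a, b, -, -, -, rfl⟩ := hz
    exact (Function.support_add _ _).trans (union_subset_union
      (Function.support_const_smul_subset _ _) (Function.support_const_smul_subset _ _))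
  exact ⟨⟨hz0, hsupp.trans (union_subset hx.1.2.1 hy.1.2.1), hxy.mono hsupp⟩, hzB⟩

universe u

/-- The cone is a retract of the space of all functions: subtract from `x u` the values of `x` at
the neighbours of `u`. -/
instance indepCone.instTietzeExtension [G.LocallyFinite] :
    TietzeExtension.{u} (indepCone G A) := by
  classical
  let ρ : (V → ℝ) → V → ℝ := fun x =>
    A.indicator fun u => max 0 (x u - ∑ w ∈ G.neighborFinset u, |x w|)
  have hρ_cont : Continuous ρ := continuous_pi fun u => by
    by_cases hu : u ∈ A <;> simp only [ρ, hu, indicator_of_mem, indicator_of_notMem,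
      not_false_eq_true] <;> fun_prop
  have hρ_mem (x : V → ℝ) : ρ x ∈ indepCone G A := by
    refine ⟨indicator_nonneg fun u _ => le_max_left _ _, support_indicator_subset, ?_⟩
    have abs_lt_of_adj {u w : V} (hu : ρ x u ≠ 0) (huw : G.Adj u w) : |x w| < x u := by
      have hle : |x w| ≤ ∑ w ∈ G.neighborFinset u, |x w| :=
        Finset.single_le_sum (fun w _ => abs_nonneg (x w)) ((G.mem_neighborFinset u w).2 huw)
      refine hle.trans_lt (sub_pos.1 (lt_of_not_ge fun hneg => hu ?_))
      rw [indicator_apply_eq_zero]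
      exact fun _ => max_eq_left hneg
    intro u hu w hw _ huw
    linarith [abs_lt_of_adj hu huw, abs_lt_of_adj hw huw.symm, le_abs_self (x u),
      le_abs_self (x w)]
  have hρ_fix (x : V → ℝ) (hx : x ∈ indepCone G A) : ρ x = x := by
    obtain ⟨hx0, hxA, hx_indep⟩ := hx
    refine (indicator_congr fun u _ => ?_).trans (indicator_eq_self.2 hxA)
    by_cases hxu : x u = 0
    · rw [hxu, zero_sub]
      exact max_eq_left (neg_nonpos.2 (Finset.sum_nonneg fun w _ => abs_nonneg (x w)))
    · rw [Finset.sum_eq_zero, sub_zero]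
      · exact max_eq_right (hx0 u)
      · intro w hw
        have huw : G.Adj u w := (G.mem_neighborFinset u w).1 hw
        exact abs_eq_zero.2 (by_contra fun hxw => hx_indep hxu hxw huw.ne huw)
  exact .of_retract ⟨Subtype.val, continuous_subtype_val⟩
    ⟨fun x => ⟨ρ x, hρ_mem x⟩, hρ_cont.subtype_mk _⟩ (ContinuousMap.ext fun x =>
      Subtype.ext (hρ_fix x x.2))

variable {M : Type u} [TopologicalSpace M] [NormalSpace M] {j : ℕ}

theorem extendsBelow_indepCone_inter_of_forall_insert [G.LocallyFinite] (hvA : v ∈ A) (hvB : v ∈ B)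
    (h : ∀ x ∈ indepCone G A ∩ somewherePos B, G.IsIndepSet (insert v x.support)) :
    ExtendsBelow M j (indepCone G A ∩ somewherePos B) := by
  classical
  have hsupp : (Pi.single v 1 : V → ℝ).support = {v} := Pi.support_single_of_ne one_ne_zero
  have hp : (Pi.single v 1 : V → ℝ) ∈ indepCone G A ∩ somewherePos B := by
    refine ⟨⟨Pi.single_nonneg.2 zero_le_one, ?_, ?_⟩, v, hvB, by simp⟩
    · rwa [hsupp, singleton_subset_iff]
    · rw [hsupp]
      exact pairwise_singleton _ _
  refine .of_starConvex (isOpen_somewherePos B) hp (starConvex_iff_segment_subset.2 fun y hy =>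
    segment_subset_indepCone_inter hp hy ?_)
  rw [hsupp, singleton_union]
  exact h y hy

theorem isIndepSet_insert {s : Set V} (hs : G.IsIndepSet s) (h : ∀ u ∈ s, ¬ G.Adj v u) :
    G.IsIndepSet (insert v s) :=
  hs.insert fun u hu _ => ⟨h u hu, fun huv => h u hu huv.symm⟩

theorem extendsBelow_indepWeights_of_isolated [G.LocallyFinite] (hv : v ∈ A)
    (h : ∀ u ∈ A, ¬ G.Adj v u) : ExtendsBelow M j (indepWeights G A) :=
  extendsBelow_indepCone_inter_of_forall_insert hv (mem_univ v) fun _ hx =>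
    isIndepSet_insert hx.1.2.2 fun u hu => h u (hx.1.2.1 hu)

theorem extendsBelow_indepCone_inter_star [G.LocallyFinite] (hv : v ∈ A) :
    ExtendsBelow M j (indepCone G A ∩ somewherePos {v}) :=
  extendsBelow_indepCone_inter_of_forall_insert hv rfl fun x hx => by
    obtain ⟨⟨-, -, hx_indep⟩, _, rfl, hxv⟩ := hx
    rwa [insert_eq_of_mem (Function.mem_support.2 hxv.ne')]

theorem update_zero_mem_indepWeights [DecidableEq V]
    (hx : x ∈ indepCone G A ∩ somewherePos {v}ᶜ) (hB : x.support \ {v} ⊆ B) :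
    Function.update x v 0 ∈ indepWeights G B := by
  obtain ⟨⟨hx0, -, hx_indep⟩, u, hu, hxu⟩ := hx
  rw [← Function.support_update_zero] at hB
  refine ⟨⟨le_update_iff.2 ⟨le_rfl, fun w _ => hx0 w⟩, hB, hx_indep.mono ?_⟩, u, mem_univ u, ?_⟩
  · rw [Function.support_update_zero]
    exact sdiff_subset
  · rwa [Function.update_of_ne hu]

theorem somewherePos_compl_of_mem_indepWeights (hx : x ∈ indepWeights G B) (hv : v ∉ B) :
    x ∈ somewherePos {v}ᶜ := by
  obtain ⟨⟨-, hxB, -⟩, u, -, hxu⟩ := hx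
  exact ⟨u, fun huv => hv (huv ▸ hxB hxu.ne'), hxu⟩

theorem ExtendsBelow.indepCone_inter_deletion [G.LocallyFinite]
    (h : ExtendsBelow M j (indepWeights G (A \ {v}))) :
    ExtendsBelow M j (indepCone G A ∩ somewherePos {v}ᶜ) := by
  classical
  have hr : MapsTo (Function.update · v 0) (indepCone G A ∩ somewherePos {v}ᶜ)
      (indepWeights G (A \ {v})) := fun x hx =>
    update_zero_mem_indepWeights hx (sdiff_subset_sdiff_left hx.1.2.1)
  have hs : MapsTo id (indepWeights G (A \ {v})) (indepCone G A ∩ somewherePos {v}ᶜ) :=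
    fun x hx => ⟨⟨hx.1.1, hx.1.2.1.trans sdiff_subset, hx.1.2.2⟩,
      somewherePos_compl_of_mem_indepWeights hx fun hv => hv.2 rfl⟩
  refine h.of_segment_subset (isOpen_somewherePos _)
    (continuous_id.update v continuous_const).continuousOn continuousOn_id hr hs
    fun x hx => ?_
  have hsupp : G.IsIndepSet (x.support ∪ (Function.update x v 0).support) := by
    rw [Function.support_update_zero, union_eq_left.2 sdiff_subset]
    exact hx.1.2.2
  exact segment_subset_indepCone_inter hx (hs (hr hx)) hsupp

theorem update_one_mem_indepCone_inter [DecidableEq V] (hv : v ∈ A)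
    (hx : x ∈ indepWeights G (A \ G.closedNbhd v)) :
    Function.update x v 1 ∈ indepCone G A ∩ (somewherePos {v} ∩ somewherePos {v}ᶜ) := by
  obtain ⟨u, hu, hxu⟩ := somewherePos_compl_of_mem_indepWeights hx fun hv => hv.2 (.inl rfl)
  obtain ⟨⟨hx0, hxA, hx_indep⟩, -⟩ := hx
  refine ⟨⟨le_update_iff.2 ⟨zero_le_one, fun w _ => hx0 w⟩, ?_, ?_⟩, ⟨v, rfl, ?_⟩, u, hu, ?_⟩
  · rw [Function.support_update_of_ne_zero _ _ one_ne_zero]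
    exact insert_subset hv (hxA.trans sdiff_subset)
  · rw [Function.support_update_of_ne_zero _ _ one_ne_zero]
    exact isIndepSet_insert hx_indep fun u hu huv => (hxA hu).2 (.inr huv)
  · rw [Function.update_self]
    exact one_pos
  · rwa [Function.update_of_ne hu]

theorem ExtendsBelow.indepCone_inter_link [G.LocallyFinite] (hv : v ∈ A)
    (h : ExtendsBelow M j (indepWeights G (A \ G.closedNbhd v))) :
    ExtendsBelow M j (indepCone G A ∩ (somewherePos {v} ∩ somewherePos {v}ᶜ)) := by
  classical
  have hr : MapsTo (Function.update · v 0) (indepCone G A ∩ (somewherePos {v} ∩ somewherePos {v}ᶜ))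
      (indepWeights G (A \ G.closedNbhd v)) := by
    rintro x ⟨hxC, ⟨_, rfl, hxv⟩, hxB⟩
    refine update_zero_mem_indepWeights ⟨hxC, hxB⟩ fun u hu => ⟨hxC.2.1 hu.1, ?_⟩
    rintro (huv | huv)
    · exact hu.2 huv
    · exact hxC.2.2 hxv.ne' hu.1 huv.ne huv
  have hs : MapsTo (Function.update · v 1) (indepWeights G (A \ G.closedNbhd v))
      (indepCone G A ∩ (somewherePos {v} ∩ somewherePos {v}ᶜ)) := fun x hx =>
    update_one_mem_indepCone_inter hv hx
  refine h.of_segment_subset ((isOpen_somewherePos _).inter (isOpen_somewherePos _))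
    (continuous_id.update v continuous_const).continuousOn
    (continuous_id.update v continuous_const).continuousOn hr hs fun x hx => ?_
  have hsupp : G.IsIndepSet (x.support ∪
      (Function.update (Function.update x v 0) v 1).support) := by
    obtain ⟨⟨-, -, hx_indep⟩, ⟨_, rfl, hxv⟩, -⟩ := hx
    rwa [Function.update_idem, Function.support_update_of_ne_zero _ _ one_ne_zero,
      insert_eq_of_mem (Function.mem_support.2 hxv.ne'), union_self]
  have hsx := hs (hr hx)
  rw [inter_inter_distrib_left] at hx hsx ⊢
  exact subset_inter (segment_subset_indepCone_inter hx.1 hsx.1 hsupp)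
    (segment_subset_indepCone_inter hx.2 hsx.2 hsupp)

theorem ExtendsBelow.indepWeights_of_deletion_of_link [G.LocallyFinite] (hv : v ∈ A)
    (hdel : ExtendsBelow M (j + 1) (indepWeights G (A \ {v})))
    (hlink : ExtendsBelow M j (indepWeights G (A \ G.closedNbhd v))) :
    ExtendsBelow M (j + 1) (indepWeights G A) := by
  rw [indepWeights, ← union_compl_self {v}, somewherePos_union]
  exact (extendsBelow_indepCone_inter_star hv).inter_union (isOpen_somewherePos _)
    (isOpen_somewherePos _) hdel.indepCone_inter_deletion (hlink.indepCone_inter_link hv)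

end IndepCone

/-! ### Claw-free graphs -/

section ClawFree

universe u

variable {V : Type*} {G : SimpleGraph V}

theorem exists_two_mul_card_nonadj_le [DecidableEq V] [DecidableRel G.Adj] (hG : G.ClawFree) {u : V}
    {D : Finset V} (hD : D.Nonempty) (hDu : ∀ x ∈ D, G.Adj u x) :
    ∃ x ∈ D, 2 * {y ∈ D.erase x | ¬ G.Adj x y}.card ≤ D.card := by
  obtain ⟨x, hx⟩ := hD
  rcases {y ∈ D.erase x | ¬ G.Adj x y}.eq_empty_or_nonempty with hempty | ⟨y, hy⟩
  · exact ⟨x, hx, by simp [hempty]⟩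
  obtain ⟨⟨hyx, hy⟩, hxy⟩ : (y ≠ x ∧ y ∈ D) ∧ ¬ G.Adj x y := by simpa using hy
  have hdisj : Disjoint {z ∈ D.erase x | ¬ G.Adj x z} {z ∈ D.erase y | ¬ G.Adj y z} := by
    simp only [Finset.disjoint_left, Finset.mem_filter, Finset.mem_erase]
    rintro z ⟨⟨hzx, hz⟩, hxz⟩ ⟨⟨hzy, -⟩, hyz⟩
    exact hG u x y z ⟨hyx.symm, hzx.symm, hzy.symm, hDu x hx, hDu y hy, hDu z hz, hxy, hxz, hyz⟩
  have hcard := Finset.card_le_card (Finset.union_subset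
    ((Finset.filter_subset (¬ G.Adj x ·) _).trans (Finset.erase_subset x D))
    ((Finset.filter_subset (¬ G.Adj y ·) _).trans (Finset.erase_subset y D)))
  rw [Finset.card_union_of_disjoint hdisj] at hcard
  by_cases hle : 2 * {z ∈ D.erase x | ¬ G.Adj x z}.card ≤ D.card
  · exact ⟨x, hx, hle⟩
  · exact ⟨y, hy, by omega⟩

variable {M : Type u} [TopologicalSpace M] [NormalSpace M] {j d : ℕ} [G.LocallyFinite]

/-- The vertices of `D` are added one by one, in the reverse of an order in which each removed
vertex `x` has few non-neighbours among those left. The link of `x` then misses at most `1 + d`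
vertices of `A` in the closed neighbourhood of `x` and `d / 2` vertices of `D` outside of it. -/
theorem ExtendsBelow.indepWeights_of_sdiff_neighbors [DecidableEq V] (hG : G.ClawFree)
    (hd : ∀ v, G.degree v ≤ d) {A D : Finset V} {u : V} (hDA : D ⊆ A) (hDu : ∀ x ∈ D, G.Adj u x)
    (hlarge : ∀ B ⊆ A, 2 * A.card ≤ 2 * B.card + 3 * d + 2 → ExtendsBelow M j (indepWeights G B))
    (h : ExtendsBelow M (j + 1) (indepWeights G ↑(A \ D))) :
    ExtendsBelow M (j + 1) (indepWeights G A) := by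
  classical
  induction D using Finset.strongInduction with | H D ih => ?_
  rcases D.eq_empty_or_nonempty with rfl | hD
  · rwa [Finset.sdiff_empty] at h
  obtain ⟨x, hx, hfew⟩ := exists_two_mul_card_nonadj_le hG hD hDu
  refine ih (D.erase x) (Finset.erase_ssubset hx) ((Finset.erase_subset x D).trans hDA)
    (fun y hy => hDu y (Finset.mem_of_mem_erase hy)) (.indepWeights_of_deletion_of_link (v := x)
      (by simp [hDA hx]) ?_ ?_)
  · convert h using 2
    ext y
    by_cases hyx : y = x <;> simp [hyx, hx]
  · let R : Finset V := insert x (G.neighborFinset x) ∪ {y ∈ D.erase x | ¬ G.Adj x y}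
    have hlink : (↑(A \ D.erase x) \ G.closedNbhd x : Set V) = ↑(A \ R) := by
      ext y
      simp only [R, closedNbhd, mem_sdiff, mem_insert_iff, mem_neighborSet, SetLike.mem_coe,
        Finset.mem_sdiff, Finset.mem_union, Finset.mem_insert, mem_neighborFinset,
        Finset.mem_filter, Finset.mem_erase]
      tauto
    have hD_card : D.card ≤ d := (Finset.card_le_card fun y hy =>
      (G.mem_neighborFinset u y).2 (hDu y hy)).trans (hd u)
    have hR_card : R.card ≤ d + 1 + {y ∈ D.erase x | ¬ G.Adj x y}.card :=
      (Finset.card_union_le _ _).trans (Nat.add_le_add_right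
        ((Finset.card_insert_le _ _).trans (Nat.succ_le_succ (hd x))) _)
    have hA_card := Finset.le_card_sdiff R A
    rw [hlink]
    exact hlarge _ Finset.sdiff_subset (by omega)

theorem extendsBelow_indepWeights_of_clawFree (hG : G.ClawFree) (hd : ∀ v, G.degree v ≤ d)
    {A : Finset V} (hA : j * (3 * d + 2) ≤ 2 * A.card + 3 * d + 1) :
    ExtendsBelow M j (indepWeights G A) := by
  classical
  induction j generalizing A with
  | zero => exact extendsBelow_zero _
  | succ j ih =>
    rw [Nat.succ_mul] at hA
    obtain ⟨u, hu⟩ : A.Nonempty := Finset.card_pos.1 (by omega)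
    refine .indepWeights_of_sdiff_neighbors (D := {y ∈ A | G.Adj u y}) (u := u) hG hd
      (Finset.filter_subset _ A) (fun y hy => (Finset.mem_filter.1 hy).2)
      (fun B _ hB => ih (by omega)) (extendsBelow_indepWeights_of_isolated (v := u) ?_ ?_)
    · simp [hu]
    · simp +contextual

end ClawFree

/-! ### The independence complex -/

theorem isNConnected_of_extendsBelow {n : ℤ} {E Y : Type*} [TopologicalSpace E] [Nonempty E]
    [TopologicalSpace Y] {X : Set E} (ι : C(Y, X)) (r : C(X, Y)) (hr : ∀ y, r (ι y) = y)
    (h : ∀ N : ℕ, N ≤ n + 1 → ExtendsBelow (EuclideanSpace ℝ (Fin N)) (N + 1) X) :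
    IsNConnected n Y := by
  refine ⟨fun hn => ?_, fun i hi f => ?_⟩
  · obtain ⟨g, -⟩ := (h 0 (by lia)).exists_continuousMap isClosed_univ
      (indDimLT_euclideanSpace_of_isCompact isCompact_univ) isClosed_empty (empty_subset _)
      ⟨isEmptyElim, continuous_of_discreteTopology⟩
    exact ⟨r (g ⟨0, mem_univ 0⟩)⟩
  · obtain ⟨g, hg⟩ := (h (i + 1) (by push_cast; lia)).exists_continuousMap isClosed_closedBall
      (indDimLT_euclideanSpace_of_isCompact (isCompact_closedBall _ _)) isClosed_sphere
      sphere_subset_closedBall (ι.comp f)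
    exact ⟨r.comp g, fun x => by simp [hg x.1 x.2, hr]⟩

section Realization

variable {V : Type*} {G : SimpleGraph V}

theorem mem_indepWeights_of_realization (y : realization (indepFaces G)) :
    y.1 ∈ indepWeights G univ := by
  obtain ⟨y, hy0, hy1, s, hs, hys⟩ := y
  have hys : y.support = s := hys
  obtain ⟨u, hu⟩ : ∃ u, y u ≠ 0 := by
    by_contra! hy
    simp [hy] at hy1
  refine ⟨⟨hy0, subset_univ _, ?_⟩, u, mem_univ u, (hy0 u).lt_of_ne' hu⟩
  rw [hys]
  exact fun a ha b hb _ => hs a ha b hb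

variable [Fintype V]

theorem sum_pos_of_mem_indepWeights {x : V → ℝ} {A : Set V} (hx : x ∈ indepWeights G A) :
    0 < ∑ v, x v := by
  obtain ⟨⟨hx0, -, -⟩, u, -, hu⟩ := hx
  exact Finset.sum_pos' (fun v _ => hx0 v) ⟨u, Finset.mem_univ u, hu⟩

theorem div_sum_mem_realization {x : V → ℝ} (hx : x ∈ indepWeights G univ) :
    (∀ v, 0 ≤ x v / ∑ u, x u) ∧ ∑ᶠ v, x v / ∑ u, x u = 1 ∧
      ∃ s ∈ indepFaces G, {v | x v / ∑ u, x u ≠ 0} = ↑s := by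
  have hsum := sum_pos_of_mem_indepWeights hx
  obtain ⟨⟨hx0, -, hx_indep⟩, -⟩ := hx
  refine ⟨fun v => div_nonneg (hx0 v) hsum.le, ?_, (toFinite x.support).toFinset, ?_, ?_⟩
  · rw [finsum_eq_sum_of_fintype, ← Finset.sum_div, div_self hsum.ne']
  · intro a ha b hb hab
    rw [Finite.mem_toFinset] at ha hb
    exact hx_indep ha hb hab.ne hab
  · ext v
    simp [hsum.ne']

/-- The radial projection of unnormalized weights to the realization of the independence complex. -/
noncomputable def normalizeWeights (x : indepWeights G univ) : realization (indepFaces G) :=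
  ⟨fun v => x.1 v / ∑ u, x.1 u, div_sum_mem_realization x.2⟩

theorem continuous_normalizeWeights :
    Continuous (normalizeWeights : indepWeights G univ → realization (indepFaces G)) := by
  have happly (v : V) : Continuous fun x : indepWeights G univ => x.1 v :=
    (continuous_apply v).comp continuous_subtype_val
  exact (continuous_pi fun v => (happly v).div (continuous_finsetSum _ fun u _ => happly u)
    fun x => (sum_pos_of_mem_indepWeights x.2).ne').subtype_mk _

theorem normalizeWeights_realization (y : realization (indepFaces G)) :
    normalizeWeights ⟨y.1, mem_indepWeights_of_realization y⟩ = y := by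
  have hsum : ∑ u, y.1 u = 1 := (finsum_eq_sum_of_fintype y.1).symm.trans y.2.2.1
  exact Subtype.ext (funext fun v => by simp [normalizeWeights, hsum])

end Realization

theorem isNConnected_realization_of_extendsBelow {V : Type*} [Finite V] {G : SimpleGraph V} {n : ℤ}
    (h : ∀ N : ℕ, N ≤ n + 1 →
      ExtendsBelow (EuclideanSpace ℝ (Fin N)) (N + 1) (indepWeights G univ)) :
    IsNConnected n (realization (indepFaces G)) :=
  have := Fintype.ofFinite V
  isNConnected_of_extendsBelow
    ⟨fun y => ⟨y.1, mem_indepWeights_of_realization y⟩, continuous_subtype_val.subtype_mk _⟩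
    ⟨normalizeWeights, continuous_normalizeWeights⟩ normalizeWeights_realization h

theorem succ_mul_le_of_le_floor {n d N : ℕ}
    (h : (N : ℤ) ≤ ⌊(2 * (n : ℚ) - 1) / (3 * d + 2) - 1⌋ + 1) :
    (N + 1) * (3 * d + 2) ≤ 2 * n + 3 * d + 1 := by
  rw [← sub_le_iff_le_add, Int.le_floor, le_sub_iff_add_le, le_div_iff₀ (by positivity)] at h
  push_cast at h
  have : (((N + 1) * (3 * d + 2) : ℕ) : ℚ) ≤ (2 * n + 3 * d + 1 : ℕ) := by
    push_cast
    linarith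
  exact_mod_cast this

/-- If `G` is claw-free with `n` vertices and maximal degree `d`, then
`Ind(G)` is `⌊(2n-1)/(3d+2) - 1⌋`-connected. -/
theorem indComplex_clawFree_connectivity {V : Type*} [Fintype V]
    (G : SimpleGraph V) [DecidableRel G.Adj] (hG : G.ClawFree) (n d : ℕ)
    (hn : Fintype.card V = n) (hd : G.maxDegree = d) :
    IsNConnected ⌊(2 * (n : ℚ) - 1) / (3 * d + 2) - 1⌋
      (realization (indepFaces G)) := by
  have hdeg (v : V) : G.degree v ≤ d := (G.degree_le_maxDegree v).trans_eq hd
  refine isNConnected_realization_of_extendsBelow fun N hN => ?_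
  rw [← Finset.coe_univ]
  refine extendsBelow_indepWeights_of_clawFree hG hdeg ?_
  rw [Finset.card_univ, hn]
  exact succ_mul_le_of_le_floor hN
end
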